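/- arXiv:2212.01017 — 2 statements merged into one kernel-verified Lean document; each statement's English description precedes it below -/
import Mathlib

section
/- Let m ≥ 4 and n = 3m. Then for every connected simple graph G on n vertices with domination number 3, ρ(G) ≥ ρ(G_2(m−2, m−3, m−2)), with equality if and only if G is isomorphic to G_2(m−2, m−3, m−2). -/
open SimpleGraph

/-- Adjacency matrix of a simple graph over ℝ. -/
noncomputable def adjMat {V : Type*} (G : SimpleGraph V) : Matrix V V ℝ :=
  Matrix.of fun i j => @ite ℝ (G.Adj i j) (Classical.propDecidable _) 1 0

/-- Spectral radius: the largest eigenvalue (supremum of the real spectrum)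
of the adjacency matrix. -/
noncomputable def specRad {V : Type*} [Fintype V] [DecidableEq V]
    (G : SimpleGraph V) : ℝ :=
  sSup (spectrum ℝ (adjMat G))

/-- `D` is a dominating set of `G`. -/
def IsDomSet {V : Type*} (G : SimpleGraph V) (D : Finset V) : Prop :=
  ∀ v ∉ D, ∃ u ∈ D, G.Adj u v

/-- The domination number of `G`. -/
noncomputable def domNum {V : Type*} [Fintype V] (G : SimpleGraph V) : ℕ :=
  sInf {k | ∃ D : Finset V, IsDomSet G D ∧ D.card = k}

/-- The tree `G₂(a,b,c)`: the path v1 v4 v5 v2 v6 v7 v3 (vertices `Sum.inl 0, …, Sum.inl 6`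
in path order), with `a` pendant edges at v1, `b` pendant edges at v2 and `c` pendant
edges at v3. -/
def G2graph (a b c : ℕ) : SimpleGraph (Fin 7 ⊕ (Fin a ⊕ Fin b ⊕ Fin c)) :=
  SimpleGraph.fromRel (fun x y =>
    (x = Sum.inl 0 ∧ y = Sum.inl 1) ∨
    (x = Sum.inl 1 ∧ y = Sum.inl 2) ∨
    (x = Sum.inl 2 ∧ y = Sum.inl 3) ∨
    (x = Sum.inl 3 ∧ y = Sum.inl 4) ∨
    (x = Sum.inl 4 ∧ y = Sum.inl 5) ∨
    (x = Sum.inl 5 ∧ y = Sum.inl 6) ∨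
    (∃ j : Fin a, x = Sum.inl 0 ∧ y = Sum.inr (Sum.inl j)) ∨
    (∃ j : Fin b, x = Sum.inl 3 ∧ y = Sum.inr (Sum.inr (Sum.inl j))) ∨
    (∃ j : Fin c, x = Sum.inl 6 ∧ y = Sum.inr (Sum.inr (Sum.inr j))))


lemma adjMat_mulVec_apply {V : Type*} [Fintype V] (G : SimpleGraph V) (y : V → ℝ) (i : V) :
    (adjMat G).mulVec y i = ∑ j, adjMat G i j * y j := rfl

lemma adjMat_nonneg {V : Type*} (G : SimpleGraph V) (i j : V) : 0 ≤ adjMat G i j := by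
  unfold adjMat; simp only [Matrix.of_apply]; split_ifs <;> norm_num

lemma adjMat_one {V : Type*} (G : SimpleGraph V) {i j : V} (h : G.Adj i j) : adjMat G i j = 1 := by
  unfold adjMat; simp [h]

lemma adjMat_zero {V : Type*} (G : SimpleGraph V) {i j : V} (h : ¬ G.Adj i j) :
    adjMat G i j = 0 := by
  unfold adjMat; simp [h]

lemma adjMat_herm {V : Type*} (G : SimpleGraph V) : (adjMat G).IsHermitian := by
  ext i j
  by_cases h : G.Adj i j
  · simp [Matrix.conjTranspose_apply, adjMat_one G h, adjMat_one G h.symm]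
  · simp [Matrix.conjTranspose_apply, adjMat_zero G h, adjMat_zero G (fun h' => h h'.symm)]

lemma spec_bdd {V : Type*} [Fintype V] [DecidableEq V] (G : SimpleGraph V) :
    BddAbove (spectrum ℝ (adjMat G)) :=
  (Matrix.finite_real_spectrum).bddAbove

lemma rayleigh {V : Type*} [Fintype V] [DecidableEq V] (G : SimpleGraph V) (y : V → ℝ) :
    ∑ i, y i * (adjMat G).mulVec y i ≤ specRad G * ∑ i, y i * y i := by
  have hps : (algebraMap ℝ (Matrix V V ℝ) (specRad G) - adjMat G).PosSemidef := by
    rw [Matrix.posSemidef_iff_isHermitian_and_spectrum_nonneg]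
    constructor
    · apply Matrix.IsHermitian.sub _ (adjMat_herm G)
      rw [Matrix.algebraMap_eq_diagonal]
      apply Matrix.isHermitian_diagonal
    · intro x hx
      rw [← spectrum.singleton_sub_eq] at hx
      obtain ⟨a, ha, b, hb, rfl⟩ := Set.mem_sub.1 hx
      have : b ≤ specRad G := le_csSup (spec_bdd G) hb
      simp only [Set.mem_singleton_iff] at ha
      subst ha
      simp only [Set.mem_ofPred_eq]
      linarith
  have h := hps.dotProduct_mulVec_nonneg y
  rw [Matrix.sub_mulVec, Algebra.algebraMap_eq_smul_one, Matrix.smul_mulVec, Matrix.one_mulVec,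
    dotProduct_sub, dotProduct_smul] at h
  simp only [dotProduct, star_trivial, smul_eq_mul] at h
  linarith

lemma sum_le_mulVec {V : Type*} [Fintype V] (G : SimpleGraph V) (y : V → ℝ)
    (hy : ∀ v, 0 ≤ y v) (i : V) (S : Finset V) (hS : ∀ j ∈ S, G.Adj i j) :
    ∑ j ∈ S, y j ≤ (adjMat G).mulVec y i := by
  rw [adjMat_mulVec_apply]
  calc ∑ j ∈ S, y j = ∑ j ∈ S, adjMat G i j * y j := by
        apply Finset.sum_congr rfl
        intro j hj
        rw [adjMat_one G (hS j hj), one_mul]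
    _ ≤ _ := Finset.sum_le_sum_of_subset_of_nonneg (Finset.subset_univ _)
        (fun j _ _ => mul_nonneg (adjMat_nonneg G i j) (hy j))

lemma lt_specRad {V : Type*} [Fintype V] [DecidableEq V] (G : SimpleGraph V) (l : ℝ) (y : V → ℝ)
    (hy : ∀ v, 0 ≤ y v) (h : ∀ v, y v ≠ 0 → l * y v ≤ (adjMat G).mulVec y v)
    (hs : ∃ v, 0 < y v ∧ l * y v < (adjMat G).mulVec y v) : l < specRad G := by
  obtain ⟨v, hv, hlt⟩ := hs
  have h1 : ∑ i, y i * (l * y i) < ∑ i, y i * (adjMat G).mulVec y i := by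
    apply Finset.sum_lt_sum
    · intro i _
      by_cases h0 : y i = 0
      · simp [h0]
      · exact mul_le_mul_of_nonneg_left (h i h0) (hy i)
    · exact ⟨v, Finset.mem_univ _, mul_lt_mul_of_pos_left hlt hv⟩
  have h2 : ∑ i, y i * (l * y i) = l * ∑ i, y i * y i := by
    rw [Finset.mul_sum]; apply Finset.sum_congr rfl; intros; ring
  have h3 := rayleigh G y
  have h4 : 0 < ∑ i, y i * y i :=
    Finset.sum_pos' (fun i _ => mul_self_nonneg _) ⟨v, Finset.mem_univ _, mul_pos hv hv⟩
  rw [h2] at h1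
  exact lt_of_mul_lt_mul_right (lt_of_lt_of_le h1 h3) h4.le

lemma le_specRad {V : Type*} [Fintype V] [DecidableEq V] [Nonempty V] (G : SimpleGraph V) (l : ℝ)
    (y : V → ℝ)
    (hy : ∀ v, 0 < y v) (h : ∀ v, l * y v ≤ (adjMat G).mulVec y v) : l ≤ specRad G := by
  have h1 : ∑ i, y i * (l * y i) ≤ ∑ i, y i * (adjMat G).mulVec y i :=
    Finset.sum_le_sum fun i _ => mul_le_mul_of_nonneg_left (h i) (hy i).le
  have h2 : ∑ i, y i * (l * y i) = l * ∑ i, y i * y i := by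
    rw [Finset.mul_sum]; apply Finset.sum_congr rfl; intros; ring
  have h3 := rayleigh G y
  have h4 : 0 < ∑ i, y i * y i :=
    Finset.sum_pos (fun i _ => mul_pos (hy i) (hy i)) Finset.univ_nonempty
  rw [h2] at h1
  exact le_of_mul_le_mul_right (h1.trans h3) h4

lemma specRad_eq {V : Type*} [Fintype V] [DecidableEq V] [Nonempty V] (G : SimpleGraph V) (l : ℝ)
    (y : V → ℝ)
    (hy : ∀ v, 0 < y v) (h : ∀ v, (adjMat G).mulVec y v = l * y v) : specRad G = l := by
  have hne : (spectrum ℝ (adjMat G)).Nonempty := by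
    obtain ⟨i⟩ := ‹Nonempty V›
    exact ⟨_, (adjMat_herm G).eigenvalues_mem_spectrum_real i⟩
  apply le_antisymm _ (le_specRad G l y hy fun v => (h v).ge)
  apply csSup_le hne
  intro μ hμ
  rw [← Matrix.spectrum_toLin', ← Module.End.hasEigenvalue_iff_mem_spectrum] at hμ
  obtain ⟨z, hz⟩ := hμ.exists_hasEigenvector
  have hz1 : (adjMat G).mulVec z = μ • z := by
    have := hz.apply_eq_smul
    rwa [Matrix.toLin'_apply] at this
  have hz0 : z ≠ 0 := hz.2
  obtain ⟨i, -, hi⟩ := Finset.exists_max_image Finset.univ (fun i => |z i| / y i)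
    Finset.univ_nonempty
  obtain ⟨j, hj⟩ := Function.ne_iff.1 hz0
  have hM : 0 < |z i| / y i :=
    lt_of_lt_of_le (div_pos (abs_pos.2 hj) (hy j)) (hi j (Finset.mem_univ _))
  set M := |z i| / y i with hMdef
  have hzi : |z i| = M * y i := by rw [hMdef]; field_simp [(hy i).ne']
  have hle : ∀ j, |z j| ≤ M * y j := fun j => (div_le_iff₀ (hy j)).1 (hi j (Finset.mem_univ _))
  have h1 : μ * |z i| ≤ l * |z i| := by
    calc μ * |z i| ≤ |μ * z i| := by
          rw [abs_mul]; exact mul_le_mul_of_nonneg_right (le_abs_self _) (abs_nonneg _)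
      _ = |(adjMat G).mulVec z i| := by rw [hz1]; simp
      _ ≤ ∑ j, |adjMat G i j * z j| := by
          rw [adjMat_mulVec_apply]; exact Finset.abs_sum_le_sum_abs _ _
      _ ≤ ∑ j, M * (adjMat G i j * y j) := by
          apply Finset.sum_le_sum
          intro j _
          rw [abs_mul, abs_of_nonneg (adjMat_nonneg G i j)]
          nlinarith [mul_le_mul_of_nonneg_left (hle j) (adjMat_nonneg G i j)]
      _ = M * (l * y i) := by rw [← Finset.mul_sum, ← adjMat_mulVec_apply, h i]
      _ = l * |z i| := by rw [hzi]; ring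
  have h2 : 0 < |z i| := by rw [hzi]; exact mul_pos hM (hy i)
  exact le_of_mul_le_mul_right h1 h2

lemma cut {V : Type*} (G : SimpleGraph V) (hc : G.Connected) (S : Finset V) (u v : V) (hu : u ∈ S)
    (hv : v ∉ S) : ∃ a ∈ S, ∃ b ∉ S, G.Adj a b := by
  obtain ⟨p⟩ := hc.preconnected u v
  obtain ⟨d, -, h1, h2⟩ := p.exists_boundary_dart (S : Set V) hu hv
  exact ⟨d.fst, h1, d.snd, h2, d.adj⟩

lemma params (m : ℕ) (hm : 4 ≤ m) : ∃ l d s : ℝ, 0 < l ∧ l ^ 2 = (m : ℝ) - 1 + d ∧ 0 < d ∧ d < 2 ∧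
    s = d * (l ^ 2 - 1) ∧ 2 < s ∧ (s - 1) * (s - 2) = 2 * l ^ 2 ∧ d * (l ^ 2 - 2) < l ^ 2 - 1 ∧
    l ^ 2 * d ^ 2 < 2 * (d + 1) ^ 2 := by
  have hm' : (4 : ℝ) ≤ m := by exact_mod_cast hm
  obtain ⟨k, hk⟩ : ∃ k : ℝ, k = (m : ℝ) - 1 := ⟨_, rfl⟩
  have hk3 : 3 ≤ k := by linarith
  have hivt := intermediate_value_Icc (a := (0 : ℝ)) (b := 2) (by norm_num)
    (f := fun d => (d * (k + d - 1) - 1) * (d * (k + d - 1) - 2) - 2 * (k + d)) (by fun_prop)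
  obtain ⟨d, ⟨hd0, hd2⟩, hd⟩ := hivt (show (0 : ℝ) ∈ _ by constructor <;> norm_num <;> nlinarith)
  simp only at hd
  have hd0' : 0 < d := by
    rcases hd0.lt_or_eq with h | h
    · exact h
    · subst h; norm_num at hd; linarith
  have hd2' : d < 2 := by
    rcases hd2.lt_or_eq with h | h
    · exact h
    · subst h; nlinarith
  obtain ⟨t, ht⟩ : ∃ t, t = k + d := ⟨_, rfl⟩
  obtain ⟨s, hs⟩ : ∃ s, s = d * (t - 1) := ⟨_, rfl⟩
  have hst : (s - 1) * (s - 2) = 2 * t := by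
    rw [hs, ht]; linarith
  have hs0 : 0 < s := by rw [hs]; apply mul_pos hd0'; linarith
  have hs2 : 2 < s := by
    by_contra hcon
    push Not at hcon
    nlinarith
  have hlt : Real.sqrt t ^ 2 = t := Real.sq_sqrt (by linarith)
  refine ⟨Real.sqrt t, d, s, Real.sqrt_pos.2 (by linarith), by rw [hlt, ← hk, ht], hd0', hd2', ?_, hs2,
    ?_, ?_, ?_⟩
  · rw [hlt, hs]
  · rw [hlt, hst]
  · rw [hlt]
    by_contra hcon
    push Not at hcon
    have hd1 : 1 < d := by
      by_contra h
      push Not at h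
      nlinarith
    have hs1 : t - 1 + d ≤ s := by rw [hs]; linarith
    have h5 : (t + d - 2) * (t + d - 3) ≤ 2 * t := by
      rw [← hst]; apply mul_le_mul <;> linarith
    rcases le_or_gt (23/5) t with h | h
    · nlinarith
    · have hd3 : 69/50 ≤ d := by
        by_contra h'
        push Not at h'
        nlinarith
      nlinarith
  · rw [hlt]
    by_contra hcon
    push Not at hcon
    have hr2 : Real.sqrt (2 * t) ^ 2 = 2 * t := Real.sq_sqrt (by linarith)
    have hr0 : 0 ≤ Real.sqrt (2 * t) := Real.sqrt_nonneg _
    set r := Real.sqrt (2 * t)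
    have hr : 2 < r := by nlinarith
    have h1 : 2 * (d + 1) ≤ r * d := by
      apply le_of_sq_le_sq _ (by positivity)
      nlinarith
    have h2 : r + 2 < s := by
      have : s = d * (r ^ 2 - 2) / 2 := by rw [hs, hr2]; ring
      rw [this]
      nlinarith
    nlinarith

/-- The eigenvector of the extremal tree. -/
noncomputable def evec (l d s : ℝ) (a b c : ℕ) : Fin 7 ⊕ (Fin a ⊕ Fin b ⊕ Fin c) → ℝ :=
  Sum.elim ![l, 1 + d, l * d, s - 1, l * d, 1 + d, l]
    (Sum.elim (fun _ => 1) (Sum.elim (fun _ => (s - 1) / l) (fun _ => 1)))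

lemma evec_pos (l d s : ℝ) (a b c : ℕ) (hl : 0 < l) (hd : 0 < d) (hs : 2 < s) :
    ∀ v, 0 < evec l d s a b c v := by
  have h1 : 0 < s - 1 := by linarith
  rintro (i | i | i | i)
  · fin_cases i <;> simp [evec] <;> first | positivity | linarith
  all_goals simp [evec]
  positivity

lemma adjMat_G2_eq (a b c : ℕ) (i j) : adjMat (G2graph a b c) i j =
    @ite ℝ ((G2graph a b c).Adj i j) (Classical.propDecidable _) 1 0 := rfl

lemma evec_eq (m : ℕ) (hm : 4 ≤ m) (l d s : ℝ) (hl : 0 < l) (hld : l ^ 2 = (m : ℝ) - 1 + d)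
    (hd : 0 < d) (hs : s = d * (l ^ 2 - 1)) (hst : (s - 1) * (s - 2) = 2 * l ^ 2) :
    ∀ v, (adjMat (G2graph (m - 2) (m - 3) (m - 2))).mulVec (evec l d s (m - 2) (m - 3) (m - 2)) v =
      l * evec l d s (m - 2) (m - 3) (m - 2) v := by
  have c2 : ((m - 2 : ℕ) : ℝ) = (m : ℝ) - 2 := by
    rw [Nat.cast_sub (by omega)]; norm_num
  have c3 : ((m - 3 : ℕ) : ℝ) = (m : ℝ) - 3 := by
    rw [Nat.cast_sub (by omega)]; norm_num
  have hm' : (4 : ℝ) ≤ m := by exact_mod_cast hm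
  rintro (i | i | i | i)
  · fin_cases i <;>
    simp only [adjMat_mulVec_apply, adjMat_G2_eq, Fintype.sum_sum_type, Fin.sum_univ_seven] <;>
    simp [G2graph, evec, c2, c3]
    · linarith
    · ring
    · rw [hs]; ring
    · have hl1 : l ^ 2 - 1 ≠ 0 := by
        intro h; linarith
      have key : (d + 2) * (s - 1) = 2 * l ^ 2 * d := by
        apply mul_right_cancel₀ hl1
        have : d * (l ^ 2 - 1) = s := hs.symm
        linear_combination hst + (s - 1 - 2 * l ^ 2) * this
      field_simp
      have hm1 : (m : ℝ) = l ^ 2 + 1 - d := by linarith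
      rw [hm1]
      linear_combination (-1) * key
    · rw [hs]; ring
    · ring
    · linarith
  all_goals
    simp only [adjMat_mulVec_apply, adjMat_G2_eq, Fintype.sum_sum_type, Fin.sum_univ_seven]
    simp [G2graph, evec]
  field_simp

lemma final_step (m : ℕ) (hm : 4 ≤ m) (G : SimpleGraph (Fin (3 * m)))
    (H : ∀ l d s : ℝ, 0 < l → l ^ 2 = (m : ℝ) - 1 + d → 0 < d → d < 2 → 
      s = d * (l ^ 2 - 1) → 2 < s → (s - 1) * (s - 2) = 2 * l ^ 2 → d * (l ^ 2 - 2) < l ^ 2 - 1 → 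
      l ^ 2 * d ^ 2 < 2 * (d + 1) ^ 2 → l < specRad G ∨
      ∃ φ : Fin 7 ⊕ (Fin (m - 2) ⊕ Fin (m - 3) ⊕ Fin (m - 2)) ≃ Fin (3 * m),
        ∀ i j, (G2graph (m - 2) (m - 3) (m - 2)).Adj i j → G.Adj (φ i) (φ j)) :
    specRad (G2graph (m - 2) (m - 3) (m - 2)) ≤ specRad G ∧
    (specRad G = specRad (G2graph (m - 2) (m - 3) (m - 2)) ↔
      Nonempty (G ≃g G2graph (m - 2) (m - 3) (m - 2))) := by
  obtain ⟨l, d, s, hl, hld, hd0, hd2, hs, hs2, hst, h1, h2⟩ := params m hm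
  have hpos := evec_pos l d s (m - 2) (m - 3) (m - 2) hl hd0 hs2
  have heq := evec_eq m hm l d s hl hld hd0 hs hst
  set T := G2graph (m - 2) (m - 3) (m - 2) with hT
  set x := evec l d s (m - 2) (m - 3) (m - 2) with hx
  have : Nonempty (Fin (3 * m)) := ⟨⟨0, by omega⟩⟩
  have hTl : specRad T = l := specRad_eq T l x hpos heq
  have hback : Nonempty (G ≃g T) → specRad G = l := by
    rintro ⟨e⟩
    apply specRad_eq G l (fun v => x (e v)) (fun v => hpos _)
    intro v
    rw [← heq (e v), adjMat_mulVec_apply, adjMat_mulVec_apply, ← e.toEquiv.sum_comp]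
    apply Finset.sum_congr rfl
    intro j _
    congr 1
    by_cases h : G.Adj v j
    · rw [adjMat_one G h]; exact (adjMat_one T (e.map_adj_iff.2 h)).symm
    · rw [adjMat_zero G h]; exact (adjMat_zero T (fun h' => h (e.map_adj_iff.1 h'))).symm
  rw [hTl]
  rcases H l d s hl hld hd0 hd2 hs hs2 hst h1 h2 with h | ⟨φ, hφ⟩
  · exact ⟨h.le, fun h' => absurd h' h.ne', hback⟩
  · have hle : ∀ i j, adjMat T i j * x j ≤ adjMat G (φ i) (φ j) * x j := by
      intro i j
      apply mul_le_mul_of_nonneg_right _ (hpos j).le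
      by_cases h : T.Adj i j
      · rw [adjMat_one T h, adjMat_one G (hφ i j h)]
      · rw [adjMat_zero T h]; exact adjMat_nonneg _ _ _
    have hmv : ∀ i, (adjMat G).mulVec (fun v => x (φ.symm v)) (φ i) =
        ∑ j, adjMat G (φ i) (φ j) * x j := by
      intro i
      rw [adjMat_mulVec_apply, ← φ.sum_comp]
      simp
    have hge : ∀ v, l * x (φ.symm v) ≤ (adjMat G).mulVec (fun v => x (φ.symm v)) v := by
      intro v
      obtain ⟨i, rfl⟩ := φ.surjective v
      rw [hmv, φ.symm_apply_apply, ← heq i, adjMat_mulVec_apply]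
      exact Finset.sum_le_sum fun j _ => hle i j
    refine ⟨le_specRad G l (fun v => x (φ.symm v)) (fun v => hpos _) hge, fun he => ?_, hback⟩
    by_contra hno
    have : ∃ i j, G.Adj (φ i) (φ j) ∧ ¬ T.Adj i j := by
      by_contra hcon
      push Not at hcon
      exact hno ⟨(RelIso.symm ⟨φ, fun {i j} => ⟨hcon i j, hφ i j⟩⟩ : G ≃g T)⟩
    obtain ⟨i, j, hij, hnij⟩ := this
    apply absurd he
    apply ne_of_gt
    apply lt_specRad G l (fun v => x (φ.symm v)) (fun v => (hpos _).le) (fun v _ => hge v)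
    refine ⟨φ i, hpos _, ?_⟩
    rw [hmv, φ.symm_apply_apply, ← heq i, adjMat_mulVec_apply]
    apply Finset.sum_lt_sum (fun j _ => hle i j)
    refine ⟨j, Finset.mem_univ _, ?_⟩
    rw [adjMat_zero T hnij, adjMat_one G hij]
    have := hpos j
    linarith

lemma high_core {V : Type*} [Fintype V] [DecidableEq V] (G : SimpleGraph V) [DecidableRel G.Adj]
    (l : ℝ) (hl : 0 < l) (c : V) (y : V → ℝ) (hy : ∀ v, 0 ≤ y v) (hc : y c = l)
    (hN : ∀ v, y v ≠ 0 → v = c ∨ (G.Adj c v ∧ y v = 1) ∨ l * y v ≤ (adjMat G).mulVec y v)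
    (hsum : l ^ 2 < ∑ v ∈ G.neighborFinset c, y v) : l < specRad G := by
  have hcc : l * y c < (adjMat G).mulVec y c := by
    have := sum_le_mulVec G y hy c (G.neighborFinset c) (by simp)
    rw [hc]; nlinarith
  apply lt_specRad G l y hy _ ⟨c, by rw [hc]; exact hl, hcc⟩
  intro v hv
  rcases hN v hv with rfl | ⟨h1, h2⟩ | h
  · exact hcc.le
  · have := sum_le_mulVec G y hy v {c} (by simpa using h1.symm)
    rw [Finset.sum_singleton, hc] at this
    rw [h2]; linarith
  · exact h

lemma high {V : Type*} [Fintype V] [DecidableEq V] (G : SimpleGraph V) [DecidableRel G.Adj]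
    (hconn : G.Connected) (m : ℕ) (hm : 4 ≤ m) (hV : Fintype.card V = 3 * m) (l d : ℝ)
    (hl : 0 < l) (hld : l ^ 2 = (m : ℝ) - 1 + d) (hd0 : 0 < d) (hd2 : d < 2)
    (h1 : d * (l ^ 2 - 2) < l ^ 2 - 1) (c : V) (hc : m ≤ G.degree c) : l < specRad G := by
  have hm' : (4 : ℝ) ≤ m := by exact_mod_cast hm
  rcases hc.lt_or_eq with hc | hc
  · apply high_core G l hl c (fun v => if v = c then l else if G.Adj c v then 1 else 0)
    · intro v; split_ifs <;> linarith
    · simp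
    · intro v hv
      by_cases h : v = c
      · exact Or.inl h
      · by_cases h' : G.Adj c v
        · right; left; simp [h, h']
        · simp [h, h'] at hv
    · have : ∑ v ∈ G.neighborFinset c, (if v = c then l else if G.Adj c v then (1 : ℝ) else 0) =
          ∑ v ∈ G.neighborFinset c, 1 := by
        apply Finset.sum_congr rfl
        intro v hv
        rw [mem_neighborFinset] at hv
        simp [hv, hv.ne']
      rw [this]
      simp only [Finset.sum_const, card_neighborFinset_eq_degree, nsmul_eq_mul, mul_one]
      have : ((m + 1 : ℕ) : ℝ) ≤ G.degree c := by exact_mod_cast hc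
      push_cast at this
      linarith
  · have hcN : (G.neighborFinset c).card = m := by rw [card_neighborFinset_eq_degree, ← hc]
    obtain ⟨w, hw⟩ : ∃ w, w ∉ insert c (G.neighborFinset c) := by
      by_contra hcon
      push Not at hcon
      have h2 := Finset.card_le_card (fun v _ => hcon v : Finset.univ ⊆ _)
      have h3 := Finset.card_insert_le c (G.neighborFinset c)
      rw [Finset.card_univ, hV] at h2
      omega
    obtain ⟨a, ha, b, hb, hab⟩ := cut G hconn _ c w (Finset.mem_insert_self _ _) hw
    simp only [Finset.mem_insert, mem_neighborFinset, not_or] at ha hb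
    have hac : G.Adj c a := by
      rcases ha with rfl | h
      · exact absurd hab hb.2
      · exact h
    obtain ⟨w, hw⟩ : ∃ w, w ∉ insert b (insert c (G.neighborFinset c)) := by
      by_contra hcon
      push Not at hcon
      have h2 := Finset.card_le_card (fun v _ => hcon v : Finset.univ ⊆ _)
      have h3 := Finset.card_insert_le c (G.neighborFinset c)
      have h4 := Finset.card_insert_le b (insert c (G.neighborFinset c))
      rw [Finset.card_univ, hV] at h2
      omega
    obtain ⟨a2, ha2, b2, hb2, hab2⟩ := cut G hconn _ b w (Finset.mem_insert_self _ _) hw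
    simp only [Finset.mem_insert, mem_neighborFinset, not_or] at ha2 hb2
    obtain ⟨hbc, hbN⟩ := hb
    obtain ⟨hb2b, hb2c, hb2N⟩ := hb2
    have hca : c ≠ a := hac.ne
    have hba : b ≠ a := hab.ne'
    have hb2a : b2 ≠ a := by rintro rfl; exact hb2N hac
    have hT2 : 0 < l ^ 2 - 2 := by linarith
    have hT1 : 0 < l ^ 2 - 1 := by linarith
    have herase : ∀ y : V → ℝ, (∀ v, G.Adj c v → v ≠ a → y v = 1) →
        ∑ v ∈ G.neighborFinset c, y v = y a + (m - 1) := by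
      intro y hy
      rw [← Finset.add_sum_erase _ _ ((G.mem_neighborFinset c a).2 hac)]
      congr 1
      rw [Finset.sum_congr rfl (g := fun _ => (1 : ℝ))]
      · rw [Finset.sum_const, Finset.card_erase_of_mem ((G.mem_neighborFinset c a).2 hac), hcN,
          nsmul_eq_mul, mul_one, Nat.cast_sub (by omega)]
        norm_num
      · intro v hv
        simp only [Finset.mem_erase, mem_neighborFinset] at hv
        exact hy v hv.2 hv.1
    rcases ha2 with h | h | h
    · skip
      subst h
      obtain ⟨y, hydef⟩ : ∃ y : V → ℝ, y = fun v => if v = c then l else if v = a then (l ^ 2 - 1) / (l ^ 2 - 2) else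
        if v = a2 then l / (l ^ 2 - 2) else if v = b2 then 1 / (l ^ 2 - 2) else
        if G.Adj c v then 1 else 0 := ⟨_, rfl⟩
      have yc : y c = l := by simp [hydef]
      have ya : y a = (l ^ 2 - 1) / (l ^ 2 - 2) := by simp [hydef, hca.symm]
      have yb : y a2 = l / (l ^ 2 - 2) := by simp [hydef, hbc, hba]
      have yb2 : y b2 = 1 / (l ^ 2 - 2) := by simp [hydef, hb2c, hb2a, hb2b]
      have yN : ∀ v, G.Adj c v → v ≠ a → y v = 1 := by
        intro v hv hva
        have e1 : v ≠ a2 := by rintro rfl; exact hbN hv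
        have e2 : v ≠ b2 := by rintro rfl; exact hb2N hv
        simp [hydef, hv, hva, e1, e2, hv.ne']
      have y0 : ∀ v, 0 ≤ y v := by
        intro v; simp only [hydef]; split_ifs <;> positivity
      apply high_core G l hl c y y0 yc
      · intro v hv
        by_cases e1 : v = c
        · exact Or.inl e1
        right
        by_cases e2 : v = a
        · right
          subst e2
          refine le_trans ?_ (sum_le_mulVec G y y0 v {c, a2} (by simp [hac.symm, hab]))
          rw [Finset.sum_pair (Ne.symm hbc), yc, ya, yb]
          apply le_of_eq; field_simp; ring
        by_cases e3 : v = a2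
        · right
          subst e3
          refine le_trans ?_ (sum_le_mulVec G y y0 v {a, b2} (by simp [hab.symm, hab2]))
          rw [Finset.sum_pair (Ne.symm hb2a), yb2, ya, yb]
          apply le_of_eq; field_simp; ring
        by_cases e4 : v = b2
        · right
          subst e4
          refine le_trans ?_ (sum_le_mulVec G y y0 v {a2} (by simp [hab2.symm]))
          rw [Finset.sum_singleton, yb2, yb]
          apply le_of_eq; field_simp
        by_cases e5 : G.Adj c v
        · exact Or.inl ⟨e5, yN v e5 e2⟩
        · simp [hydef, e1, e2, e3, e4, e5] at hv
      · rw [herase y yN, ya]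
        have : d < (l ^ 2 - 1) / (l ^ 2 - 2) := by rw [lt_div_iff₀ hT2]; exact h1
        linarith
    · subst h
      exact absurd hab2 hb2N
    · by_cases haa : a2 = a
      · skip
        subst haa
        obtain ⟨y, hydef⟩ : ∃ y : V → ℝ, y = fun v => if v = c then l else if v = a2 then l ^ 2 / (l ^ 2 - 2) else
          if v = b then l / (l ^ 2 - 2) else if v = b2 then l / (l ^ 2 - 2) else
          if G.Adj c v then 1 else 0 := ⟨_, rfl⟩
        have yc : y c = l := by simp [hydef]
        have ya : y a2 = l ^ 2 / (l ^ 2 - 2) := by simp [hydef, hca.symm]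
        have yb : y b = l / (l ^ 2 - 2) := by simp [hydef, hbc, hba]
        have yb2 : y b2 = l / (l ^ 2 - 2) := by simp [hydef, hb2c, hb2a, hb2b]
        have yN : ∀ v, G.Adj c v → v ≠ a2 → y v = 1 := by
          intro v hv hva
          have e1 : v ≠ b := by rintro rfl; exact hbN hv
          have e2 : v ≠ b2 := by rintro rfl; exact hb2N hv
          simp [hydef, hv, hva, e1, e2, hv.ne']
        have y0 : ∀ v, 0 ≤ y v := by
          intro v; simp only [hydef]; split_ifs <;> positivity
        apply high_core G l hl c y y0 yc
        · intro v hv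
          by_cases e1 : v = c
          · exact Or.inl e1
          right
          by_cases e2 : v = a2
          · right
            subst e2
            refine le_trans ?_ (sum_le_mulVec G y y0 v {c, b, b2} (by simp [hac.symm, hab, hab2]))
            rw [Finset.sum_insert (by simp [Ne.symm hbc, Ne.symm hb2c]),
              Finset.sum_pair (Ne.symm hb2b), yc, ya, yb, yb2]
            apply le_of_eq; field_simp; ring
          by_cases e3 : v = b
          · right
            subst e3
            refine le_trans ?_ (sum_le_mulVec G y y0 v {a2} (by simp [hab.symm]))
            rw [Finset.sum_singleton, ya, yb]
            apply le_of_eq; field_simp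
          by_cases e4 : v = b2
          · right
            subst e4
            refine le_trans ?_ (sum_le_mulVec G y y0 v {a2} (by simp [hab2.symm]))
            rw [Finset.sum_singleton, yb2, ya]
            apply le_of_eq; field_simp
          by_cases e5 : G.Adj c v
          · exact Or.inl ⟨e5, yN v e5 e2⟩
          · simp [hydef, e1, e2, e3, e4, e5] at hv
        · rw [herase y yN, ya]
          have : d < l ^ 2 / (l ^ 2 - 2) := by rw [lt_div_iff₀ hT2]; linarith
          linarith
      · skip
        have hba2 : b ≠ a2 := by rintro rfl; exact hbN h
        have hb2a2 : b2 ≠ a2 := by rintro rfl; exact hb2N h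
        obtain ⟨y, hydef⟩ : ∃ y : V → ℝ, y = fun v => if v = c then l else if v = a then l ^ 2 / (l ^ 2 - 1) else
          if v = a2 then l ^ 2 / (l ^ 2 - 1) else
          if v = b then l / (l ^ 2 - 1) else if v = b2 then l / (l ^ 2 - 1) else
          if G.Adj c v then 1 else 0 := ⟨_, rfl⟩
        have yc : y c = l := by simp [hydef]
        have ya : y a = l ^ 2 / (l ^ 2 - 1) := by simp [hydef, hca.symm]
        have ya2 : y a2 = l ^ 2 / (l ^ 2 - 1) := by simp [hydef, h.ne', haa]
        have yb : y b = l / (l ^ 2 - 1) := by simp [hydef, hbc, hba, hba2]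
        have yb2 : y b2 = l / (l ^ 2 - 1) := by simp [hydef, hb2c, hb2a, hb2b, hb2a2]
        have yN : ∀ v, G.Adj c v → v ≠ a → v ≠ a2 → y v = 1 := by
          intro v hv hva hva2
          have e1 : v ≠ b := by rintro rfl; exact hbN hv
          have e2 : v ≠ b2 := by rintro rfl; exact hb2N hv
          simp [hydef, hv, hva, e1, e2, hv.ne', hva2]
        have y0 : ∀ v, 0 ≤ y v := by
          intro v; simp only [hydef]; split_ifs <;> positivity
        apply high_core G l hl c y y0 yc
        · intro v hv
          by_cases e1 : v = c
          · exact Or.inl e1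
          right
          by_cases e2 : v = a
          · right
            subst e2
            refine le_trans ?_ (sum_le_mulVec G y y0 v {c, b} (by simp [hac.symm, hab]))
            rw [Finset.sum_pair (Ne.symm hbc), yc, ya, yb]
            apply le_of_eq; field_simp; ring
          by_cases e2' : v = a2
          · right
            subst e2'
            refine le_trans ?_ (sum_le_mulVec G y y0 v {c, b2} (by simp [h.symm, hab2]))
            rw [Finset.sum_pair (Ne.symm hb2c), yc, ya2, yb2]
            apply le_of_eq; field_simp; ring
          by_cases e3 : v = b
          · right
            subst e3
            refine le_trans ?_ (sum_le_mulVec G y y0 v {a} (by simp [hab.symm]))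
            rw [Finset.sum_singleton, ya, yb]
            apply le_of_eq; field_simp
          by_cases e4 : v = b2
          · right
            subst e4
            refine le_trans ?_ (sum_le_mulVec G y y0 v {a2} (by simp [hab2.symm]))
            rw [Finset.sum_singleton, yb2, ya2]
            apply le_of_eq; field_simp
          by_cases e5 : G.Adj c v
          · exact Or.inl ⟨e5, yN v e5 e2 e2'⟩
          · simp [hydef, e1, e2, e2', e3, e4, e5] at hv
        · have hsum : ∑ v ∈ G.neighborFinset c, y v = y a + (y a2 + (m - 2)) := by
            have hm2 : a2 ∈ (G.neighborFinset c).erase a := by simp [haa, h]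
            rw [← Finset.add_sum_erase _ _ ((G.mem_neighborFinset c a).2 hac),
              ← Finset.add_sum_erase _ _ hm2]
            congr 2
            rw [Finset.sum_congr rfl (g := fun _ => (1 : ℝ))]
            · rw [Finset.sum_const, Finset.card_erase_of_mem hm2,
                Finset.card_erase_of_mem ((G.mem_neighborFinset c a).2 hac), hcN,
                nsmul_eq_mul, mul_one, Nat.sub_sub, Nat.cast_sub (by omega)]
              norm_num
            · intro v hv
              simp only [Finset.mem_erase, mem_neighborFinset] at hv
              exact yN v hv.2.2 hv.2.1 hv.1
          rw [hsum, ya, ya2]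
          have : (d + 1) / 2 < l ^ 2 / (l ^ 2 - 1) := by rw [lt_div_iff₀ hT1]; nlinarith
          linarith

lemma low {V : Type*} [Fintype V] [DecidableEq V] (G : SimpleGraph V) [DecidableRel G.Adj]
    (m : ℕ) (hm : 4 ≤ m) (hV : Fintype.card V = 3 * m) (l d : ℝ)
    (hl : 0 < l) (hld : l ^ 2 = (m : ℝ) - 1 + d) (hd0 : 0 < d)
    (h2 : l ^ 2 * d ^ 2 < 2 * (d + 1) ^ 2) (u1 u2 u3 : V)
    (d1 : G.degree u1 = m - 1) (d2 : G.degree u2 = m - 1) (d3 : G.degree u3 = m - 1)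
    (hcov : ∀ v, (v = u1 ∨ G.Adj u1 v) ∨ (v = u2 ∨ G.Adj u2 v) ∨ (v = u3 ∨ G.Adj u3 v))
    (D12 : ∀ v, (v = u1 ∨ G.Adj u1 v) → (v = u2 ∨ G.Adj u2 v) → False)
    (D13 : ∀ v, (v = u1 ∨ G.Adj u1 v) → (v = u3 ∨ G.Adj u3 v) → False)
    (D23 : ∀ v, (v = u2 ∨ G.Adj u2 v) → (v = u3 ∨ G.Adj u3 v) → False)
    (a b b' c : V) (ha : a = u1 ∨ G.Adj u1 a) (hb : b = u2 ∨ G.Adj u2 b)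
    (hb' : b' = u2 ∨ G.Adj u2 b') (hc : c = u3 ∨ G.Adj u3 c) (hab : G.Adj a b) (hbc : G.Adj b' c) :
    l < specRad G ∨
      ∃ φ : Fin 7 ⊕ (Fin (m - 2) ⊕ Fin (m - 3) ⊕ Fin (m - 2)) ≃ V,
        ∀ i j, (G2graph (m - 2) (m - 3) (m - 2)).Adj i j → G.Adj (φ i) (φ j) := by
  have hm' : (4 : ℝ) ≤ m := by exact_mod_cast hm
  replace ha : G.Adj u1 a := by
    rcases ha with rfl | h
    · exact absurd hb (D12 b (Or.inr hab))
    · exact h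
  replace hb : G.Adj u2 b := by
    rcases hb with rfl | h
    · exact (D12 a (Or.inr ha) (Or.inr hab.symm)).elim
    · exact h
  replace hb' : G.Adj u2 b' := by
    rcases hb' with rfl | h
    · exact (D23 c (Or.inr hbc) hc).elim
    · exact h
  replace hc : G.Adj u3 c := by
    rcases hc with rfl | h
    · exact (D23 b' (Or.inr hb') (Or.inr hbc.symm)).elim
    · exact h
  have n1 := ha.ne
  have n2 := hb.ne
  have n3 := hc.ne
  by_cases hbb : b = b'
  · left
    subst hbb
    obtain ⟨y, hydef⟩ : ∃ y : V → ℝ, y = fun v => if v = u1 ∨ v = u3 then l * (d + 1) else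
      if v = a ∨ v = c then (d + 1) * (d + 1) else if v = u2 then l * (l * d) else
      if v = b then (d + 1) * (l * d) else if G.Adj u2 v then l * d else d + 1 := ⟨_, rfl⟩
    have y0 : ∀ v, 0 < y v := by
      intro v; simp only [hydef]; split_ifs <;> positivity
    have yu1 : y u1 = l * (d + 1) := by simp [hydef]
    have yu3 : y u3 = l * (d + 1) := by simp [hydef]
    have yu2 : y u2 = l * (l * d) := by grind
    have ya : y a = (d + 1) * (d + 1) := by grind
    have yc : y c = (d + 1) * (d + 1) := by grind
    have yb : y b = (d + 1) * (l * d) := by grind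
    have yN1 : ∀ v, G.Adj u1 v → v ≠ a → y v = d + 1 := by
      intro v h h'
      have := h.ne
      grind
    have yN3 : ∀ v, G.Adj u3 v → v ≠ c → y v = d + 1 := by
      intro v h h'
      have := h.ne
      grind
    have yN2 : ∀ v, G.Adj u2 v → v ≠ b → y v = l * d := by
      intro v h h'
      have := h.ne
      grind
    have hcen : ∀ u w : V, ∀ e : ℝ, G.degree u = m - 1 → G.Adj u w → y w = (d + 1) * e →
        (∀ v, G.Adj u v → v ≠ w → y v = e) → y u = l * e → l * y u ≤ (adjMat G).mulVec y u := by
      intro u w e hdeg huw hw hv hu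
      have := sum_le_mulVec G y (fun v => (y0 v).le) u (G.neighborFinset u) (by simp)
      refine le_trans (le_of_eq ?_) this
      have hmem := (G.mem_neighborFinset u w).2 huw
      rw [← Finset.add_sum_erase _ _ hmem, Finset.sum_congr rfl (g := fun _ => e)]
      · rw [Finset.sum_const, Finset.card_erase_of_mem hmem, card_neighborFinset_eq_degree, hdeg,
          Nat.sub_sub, nsmul_eq_mul, Nat.cast_sub (by omega), hw, hu]
        push_cast
        linear_combination e * hld
      · intro v hv'
        simp only [Finset.mem_erase, mem_neighborFinset] at hv'
        exact hv v hv'.2 hv'.1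
    have hleaf : ∀ u v : V, ∀ e : ℝ, G.Adj u v → y v = e → y u = l * e →
        l * y v ≤ (adjMat G).mulVec y v := by
      intro u v e h hv hu
      have := sum_le_mulVec G y (fun v => (y0 v).le) v {u} (by simpa using h.symm)
      rw [Finset.sum_singleton, hu] at this
      rw [hv]; exact this
    have hbst : l * y b < (adjMat G).mulVec y b := by
      refine lt_of_lt_of_le ?_ (sum_le_mulVec G y (fun v => (y0 v).le) b {u2, a, c}
        (by simp [hb.symm, hab.symm, hbc]))
      rw [Finset.sum_insert (by grind), Finset.sum_pair (by grind), yb, yu2, ya, yc]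
      nlinarith
    apply lt_specRad G l y (fun v => (y0 v).le) _ ⟨b, y0 b, hbst⟩
    intro v _
    rcases hcov v with (h | h) | (h | h) | (h | h)
    · subst h; exact hcen v a _ d1 ha ya yN1 yu1
    · by_cases hva : v = a
      · subst hva
        refine le_trans ?_ (sum_le_mulVec G y (fun v => (y0 v).le) v {u1, b}
          (by simp [ha.symm, hab]))
        rw [Finset.sum_pair (by grind), yb, yu1, ya]
        apply le_of_eq; ring
      · exact hleaf u1 v _ h (yN1 v h hva) yu1
    · subst h; exact hcen v b _ d2 hb yb yN2 yu2
    · by_cases hva : v = b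
      · subst hva; exact hbst.le
      · exact hleaf u2 v _ h (yN2 v h hva) yu2
    · subst h; exact hcen v c _ d3 hc yc yN3 yu3
    · by_cases hva : v = c
      · subst hva
        refine le_trans ?_ (sum_le_mulVec G y (fun v => (y0 v).le) v {u3, b}
          (by simp [hc.symm, hbc.symm]))
        rw [Finset.sum_pair (by grind), yb, yu3, yc]
        apply le_of_eq; ring
      · exact hleaf u3 v _ h (yN3 v h hva) yu3
  · right
    have k1 : ((G.neighborFinset u1).erase a).card = m - 2 := by
      rw [Finset.card_erase_of_mem (by simpa using ha), card_neighborFinset_eq_degree, d1]; omega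
    have k3 : ((G.neighborFinset u3).erase c).card = m - 2 := by
      rw [Finset.card_erase_of_mem (by simpa using hc), card_neighborFinset_eq_degree, d3]; omega
    have k2 : (((G.neighborFinset u2).erase b).erase b').card = m - 3 := by
      rw [Finset.card_erase_of_mem (by simp [hb', Ne.symm hbb]),
        Finset.card_erase_of_mem (by simpa using hb), card_neighborFinset_eq_degree, d2]; omega
    let e1 := (Finset.equivFinOfCardEq k1).symm
    let e2 := (Finset.equivFinOfCardEq k2).symm
    let e3 := (Finset.equivFinOfCardEq k3).symm
    let f : Fin 7 ⊕ (Fin (m - 2) ⊕ Fin (m - 3) ⊕ Fin (m - 2)) → V :=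
      Sum.elim ![u1, a, b, u2, b', c, u3] (Sum.elim (fun i => (e1 i : V))
        (Sum.elim (fun i => (e2 i : V)) (fun i => (e3 i : V))))
    have hsurj : Function.Surjective f := by
      intro v
      rcases hcov v with (h | h) | (h | h) | (h | h)
      · exact ⟨Sum.inl 0, h.symm⟩
      · by_cases hv : v = a
        · exact ⟨Sum.inl 1, hv.symm⟩
        · refine ⟨Sum.inr (Sum.inl (e1.symm ⟨v, by simp [hv, h]⟩)), ?_⟩
          simp [f]
      · exact ⟨Sum.inl 3, h.symm⟩
      · by_cases hv : v = b
        · exact ⟨Sum.inl 2, hv.symm⟩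
        by_cases hv' : v = b'
        · exact ⟨Sum.inl 4, hv'.symm⟩
        · refine ⟨Sum.inr (Sum.inr (Sum.inl (e2.symm ⟨v, by simp [hv, hv', h]⟩))), ?_⟩
          simp [f]
      · exact ⟨Sum.inl 6, h.symm⟩
      · by_cases hv : v = c
        · exact ⟨Sum.inl 5, hv.symm⟩
        · refine ⟨Sum.inr (Sum.inr (Sum.inr (e3.symm ⟨v, by simp [hv, h]⟩))), ?_⟩
          simp [f]
    have hbij : Function.Bijective f := by
      rw [Fintype.bijective_iff_surjective_and_card]
      refine ⟨hsurj, ?_⟩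
      simp only [Fintype.card_sum, Fintype.card_fin, hV]
      omega
    have m1 : ∀ i, G.Adj u1 (e1 i) := fun i => by
      have := (e1 i).2
      simp only [Finset.mem_erase, mem_neighborFinset] at this
      exact this.2
    have m2 : ∀ i, G.Adj u2 (e2 i) := fun i => by
      have := (e2 i).2
      simp only [Finset.mem_erase, mem_neighborFinset] at this
      exact this.2.2
    have m3 : ∀ i, G.Adj u3 (e3 i) := fun i => by
      have := (e3 i).2
      simp only [Finset.mem_erase, mem_neighborFinset] at this
      exact this.2
    refine ⟨Equiv.ofBijective f hbij, ?_⟩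
    have key : ∀ i j, ((i = Sum.inl 0 ∧ j = Sum.inl 1) ∨
        (i = Sum.inl 1 ∧ j = Sum.inl 2) ∨
        (i = Sum.inl 2 ∧ j = Sum.inl 3) ∨
        (i = Sum.inl 3 ∧ j = Sum.inl 4) ∨
        (i = Sum.inl 4 ∧ j = Sum.inl 5) ∨
        (i = Sum.inl 5 ∧ j = Sum.inl 6) ∨
        (∃ k, i = Sum.inl 0 ∧ j = Sum.inr (Sum.inl k)) ∨
        (∃ k, i = Sum.inl 3 ∧ j = Sum.inr (Sum.inr (Sum.inl k))) ∨
        (∃ k, i = Sum.inl 6 ∧ j = Sum.inr (Sum.inr (Sum.inr k)))) → G.Adj (f i) (f j) := by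
      rintro i j (⟨rfl, rfl⟩ | ⟨rfl, rfl⟩ | ⟨rfl, rfl⟩ | ⟨rfl, rfl⟩ | ⟨rfl, rfl⟩ | ⟨rfl, rfl⟩ |
        ⟨k, rfl, rfl⟩ | ⟨k, rfl, rfl⟩ | ⟨k, rfl, rfl⟩)
      · exact ha
      · exact hab
      · exact hb.symm
      · exact hb'
      · exact hbc
      · exact hc.symm
      · exact m1 k
      · exact m2 k
      · exact m3 k
    intro i j hij
    rw [G2graph, fromRel_adj] at hij
    rcases hij.2 with h | h
    · exact key i j h
    · exact (key j i h).symm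

lemma low_all {V : Type*} [Fintype V] [DecidableEq V] (G : SimpleGraph V) [DecidableRel G.Adj]
    (hconn : G.Connected)
    (m : ℕ) (hm : 4 ≤ m) (hV : Fintype.card V = 3 * m) (l d : ℝ)
    (hl : 0 < l) (hld : l ^ 2 = (m : ℝ) - 1 + d) (hd0 : 0 < d)
    (h2 : l ^ 2 * d ^ 2 < 2 * (d + 1) ^ 2) (u1 u2 u3 : V)
    (d1 : G.degree u1 = m - 1) (d2 : G.degree u2 = m - 1) (d3 : G.degree u3 = m - 1)
    (hcov : ∀ v, (v = u1 ∨ G.Adj u1 v) ∨ (v = u2 ∨ G.Adj u2 v) ∨ (v = u3 ∨ G.Adj u3 v))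
    (D12 : ∀ v, (v = u1 ∨ G.Adj u1 v) → (v = u2 ∨ G.Adj u2 v) → False)
    (D13 : ∀ v, (v = u1 ∨ G.Adj u1 v) → (v = u3 ∨ G.Adj u3 v) → False)
    (D23 : ∀ v, (v = u2 ∨ G.Adj u2 v) → (v = u3 ∨ G.Adj u3 v) → False) :
    l < specRad G ∨
      ∃ φ : Fin 7 ⊕ (Fin (m - 2) ⊕ Fin (m - 3) ⊕ Fin (m - 2)) ≃ V,
        ∀ i j, (G2graph (m - 2) (m - 3) (m - 2)).Adj i j → G.Adj (φ i) (φ j) := by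
  have hcut : ∀ u w : V, ¬ (w = u ∨ G.Adj u w) →
      ∃ a b, (a = u ∨ G.Adj u a) ∧ ¬ (b = u ∨ G.Adj u b) ∧ G.Adj a b := by
    intro u w hw
    obtain ⟨a, ha, b, hb, hab⟩ := cut G hconn (insert u (G.neighborFinset u)) u w
      (Finset.mem_insert_self _ _) (by simpa using hw)
    exact ⟨a, b, by simpa using ha, by simpa using hb, hab⟩
  have L := low G m hm hV l d hl hld hd0 h2
  have c1 : ∀ v, (v = u2 ∨ G.Adj u2 v) ∨ (v = u1 ∨ G.Adj u1 v) ∨ (v = u3 ∨ G.Adj u3 v) := by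
    intro v
    rcases hcov v with h | h | h <;> first | exact Or.inl h | exact Or.inr (Or.inl h) | exact Or.inr (Or.inr h)
  have c2 : ∀ v, (v = u1 ∨ G.Adj u1 v) ∨ (v = u3 ∨ G.Adj u3 v) ∨ (v = u2 ∨ G.Adj u2 v) := by
    intro v
    rcases hcov v with h | h | h <;> first | exact Or.inl h | exact Or.inr (Or.inl h) | exact Or.inr (Or.inr h)
  have c3 : ∀ v, (v = u3 ∨ G.Adj u3 v) ∨ (v = u1 ∨ G.Adj u1 v) ∨ (v = u2 ∨ G.Adj u2 v) := by
    intro v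
    rcases hcov v with h | h | h <;> first | exact Or.inl h | exact Or.inr (Or.inl h) | exact Or.inr (Or.inr h)
  obtain ⟨a, b, ha, hb, hab⟩ := hcut u1 u2 (fun h => D12 u2 h (Or.inl rfl))
  obtain ⟨p, q, hp, hq, hpq⟩ := hcut u3 u1 (fun h => D13 u1 (Or.inl rfl) h)
  obtain ⟨r, s, hr, hs, hrs⟩ := hcut u2 u1 (fun h => D12 u1 (Or.inl rfl) h)
  have S12 := fun v x y => D12 v y x
  have S13 := fun v x y => D13 v y x
  have S23 := fun v x y => D23 v y x
  rcases (hcov b).resolve_left hb with hb | hb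
  · skip
    rcases c1 q with hq' | hq' | hq'
    · exact L u1 u2 u3 d1 d2 d3 hcov D12 D13 D23 a b q p ha hb hq' hp hab hpq.symm
    · exact L u2 u1 u3 d2 d1 d3 c1 S12 D23 D13 b a q p hb ha hq' hp hab.symm hpq.symm
    · exact absurd hq' hq
  · skip
    rcases hcov s with hs' | hs' | hs'
    · exact L u3 u1 u2 d3 d1 d2 c3 S13 S23 D12
        b a s r hb ha hs' hr hab.symm hrs.symm
    · exact absurd hs' hs
    · exact L u1 u3 u2 d1 d3 d2 c2 D13 D12 S23 a b s r ha hb hs' hr hab hrs.symm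

theorem domNum_three_min_specRad_n_eq_3m (m : ℕ) (hm : 4 ≤ m)
    (G : SimpleGraph (Fin (3 * m))) (hconn : G.Connected) (hdom : domNum G = 3) :
    specRad (G2graph (m - 2) (m - 3) (m - 2)) ≤ specRad G ∧
    (specRad G = specRad (G2graph (m - 2) (m - 3) (m - 2)) ↔
      Nonempty (G ≃g G2graph (m - 2) (m - 3) (m - 2))) := by
  classical
  apply final_step m hm G
  intro l d s hl hld hd0 hd2 hs hs2 hst h1 h2
  by_cases hdeg : ∃ c, m ≤ G.degree c
  · obtain ⟨c, hc⟩ := hdeg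
    exact Or.inl (high G hconn m hm (by simp) l d hl hld hd0 hd2 h1 c hc)
  push Not at hdeg
  have hmem : domNum G ∈ {k | ∃ D : Finset (Fin (3 * m)), IsDomSet G D ∧ D.card = k} := by
    apply Nat.sInf_mem
    exact ⟨_, Finset.univ, fun v hv => absurd (Finset.mem_univ v) hv, rfl⟩
  obtain ⟨D, hD, hDc⟩ := hmem
  rw [hdom, Finset.card_eq_three] at hDc
  obtain ⟨u1, u2, u3, -, -, -, rfl⟩ := hDc
  have hcov : ∀ v, (v = u1 ∨ G.Adj u1 v) ∨ (v = u2 ∨ G.Adj u2 v) ∨ (v = u3 ∨ G.Adj u3 v) := by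
    intro v
    by_cases hv : v ∈ ({u1, u2, u3} : Finset (Fin (3 * m)))
    · simp only [Finset.mem_insert, Finset.mem_singleton] at hv
      tauto
    · obtain ⟨u, hu, huv⟩ := hD v hv
      simp only [Finset.mem_insert, Finset.mem_singleton] at hu
      rcases hu with rfl | rfl | rfl <;> tauto
  let C : Fin (3 * m) → Finset (Fin (3 * m)) := fun u => insert u (G.neighborFinset u)
  have hCmem : ∀ u v, v ∈ C u ↔ (v = u ∨ G.Adj u v) := by
    intro u v; simp [C]
  have hC : ∀ u, (C u).card = G.degree u + 1 := by
    intro u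
    rw [Finset.card_insert_of_notMem (by simp), card_neighborFinset_eq_degree]
  have huniv : C u1 ∪ (C u2 ∪ C u3) = Finset.univ := by
    ext v
    simp only [Finset.mem_union, hCmem, Finset.mem_univ, iff_true]
    exact hcov v
  have e1 := Finset.card_union_add_card_inter (C u1) (C u2 ∪ C u3)
  have e2 := Finset.card_union_add_card_inter (C u2) (C u3)
  rw [huniv, Finset.card_univ, Fintype.card_fin] at e1
  have q1 := hC u1
  have q2 := hC u2
  have q3 := hC u3
  have g1 := hdeg u1
  have g2 := hdeg u2
  have g3 := hdeg u3
  have z1 : (C u1 ∩ (C u2 ∪ C u3)).card = 0 := by omega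
  have z2 : (C u2 ∩ C u3).card = 0 := by omega
  rw [Finset.card_eq_zero] at z1 z2
  refine low_all G hconn m hm (by simp) l d hl hld hd0 h2 u1 u2 u3 (by omega) (by omega) (by omega)
    hcov ?_ ?_ ?_
  · intro v x y
    have : v ∈ C u1 ∩ (C u2 ∪ C u3) := by
      simp only [Finset.mem_inter, Finset.mem_union, hCmem]; exact ⟨x, Or.inl y⟩
    rw [z1] at this; simp at this
  · intro v x y
    have : v ∈ C u1 ∩ (C u2 ∪ C u3) := by
      simp only [Finset.mem_inter, Finset.mem_union, hCmem]; exact ⟨x, Or.inr y⟩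
    rw [z1] at this; simp at this
  · intro v x y
    have : v ∈ C u2 ∩ C u3 := by
      simp only [Finset.mem_inter, hCmem]; exact ⟨x, y⟩
    rw [z2] at this; simp at this
end

section
/- Let m ≥ 3 and n = 3m + 2. Then for every connected simple graph G on n vertices with domination number 3, ρ(G) ≥ ρ(G_2(m−1, m−3, m−1)), with equality if and only if G is isomorphic to G_2(m−1, m−3, m−1). -/
open SimpleGraph

set_option linter.all false

namespace SRProof

lemma adj_apply {V : Type*} (G : SimpleGraph V) (i j : V) [Decidable (G.Adj i j)] :
    adjMat G i j = if G.Adj i j then 1 else 0 := by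
  simp only [adjMat, Matrix.of_apply]
  congr

lemma adj_nonneg {V : Type*} (G : SimpleGraph V) (i j : V) : 0 ≤ adjMat G i j := by
  classical
  rw [adj_apply]; split_ifs <;> norm_num

lemma adj_symm {V : Type*} (G : SimpleGraph V) (i j : V) : adjMat G i j = adjMat G j i := by
  classical
  rw [adj_apply, adj_apply]; simp [G.adj_comm]

lemma herm {V : Type*} (G : SimpleGraph V) : (adjMat G).IsHermitian := by
  ext i j
  simp [adj_symm G i j]

section
variable {V : Type*} [Fintype V] [DecidableEq V]

lemma spec_fin (G : SimpleGraph V) : (spectrum ℝ (adjMat G)).Finite := by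
  rw [(herm G).spectrum_real_eq_range_eigenvalues]
  exact Set.finite_range _

lemma psd (G : SimpleGraph V) :
    (algebraMap ℝ (Matrix V V ℝ) (specRad G) - adjMat G).PosSemidef := by
  have hh : (algebraMap ℝ (Matrix V V ℝ) (specRad G) - adjMat G).IsHermitian := by
    refine Matrix.IsHermitian.sub ?_ (herm G)
    ext i j
    simp [Matrix.algebraMap_matrix_apply, eq_comm]
  rw [hh.posSemidef_iff_eigenvalues_nonneg]
  intro i
  have h1 : hh.eigenvalues i ∈ spectrum ℝ (algebraMap ℝ (Matrix V V ℝ) (specRad G) - adjMat G) := by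
    rw [hh.spectrum_real_eq_range_eigenvalues]; exact ⟨i, rfl⟩
  rw [← spectrum.singleton_sub_eq] at h1
  obtain ⟨a, ha, b, hb, hab⟩ := h1
  have : b ≤ specRad G := le_csSup (spec_fin G).bddAbove hb
  simp only [Set.mem_singleton_iff] at ha
  simp only at hab
  show 0 ≤ hh.eigenvalues i
  linarith

lemma key_strict (G : SimpleGraph V) (t : ℝ) (x : V → ℝ) (h0 : ∀ v, 0 ≤ x v)
    (hle : ∀ v, t * x v ≤ (adjMat G).mulVec x v)
    (hs : ∃ v, t * x v < (adjMat G).mulVec x v) : t < specRad G := by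
  by_contra hcon
  push Not at hcon
  have hp := psd G
  have hnn := hp.dotProduct_mulVec_nonneg x
  have hv : ∀ v, ((algebraMap ℝ (Matrix V V ℝ) (specRad G) - adjMat G).mulVec x) v
      = specRad G * x v - (adjMat G).mulVec x v := by
    intro v
    rw [Matrix.sub_mulVec, Algebra.algebraMap_eq_smul_one, Matrix.smul_mulVec, Matrix.one_mulVec]
    simp
  have hterm : ∀ v, specRad G * x v - (adjMat G).mulVec x v ≤ 0 := by
    intro v
    have := hle v
    have := mul_le_mul_of_nonneg_right hcon (h0 v)
    linarith
  have hnp : star x ⬝ᵥ ((algebraMap ℝ (Matrix V V ℝ) (specRad G) - adjMat G).mulVec x) ≤ 0 := by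
    simp only [dotProduct, hv]
    refine Finset.sum_nonpos fun v _ => ?_
    simpa using mul_nonpos_of_nonneg_of_nonpos (h0 v) (hterm v)
  have hz := (hp.dotProduct_mulVec_zero_iff x).1 (le_antisymm hnp hnn)
  obtain ⟨v, hvs⟩ := hs
  have h1 := congrFun hz v
  rw [hv] at h1
  have := mul_le_mul_of_nonneg_right hcon (h0 v)
  simp at h1
  linarith

lemma key_conn (G : SimpleGraph V) (hG : G.Connected) (t : ℝ) (x : V → ℝ) (h0 : ∀ v, 0 ≤ x v)
    (hle : ∀ v, t * x v ≤ (adjMat G).mulVec x v) (a b : V) (ha : x a = 0) (hb : 0 < x b) :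
    t < specRad G := by
  classical
  apply key_strict G t x h0 hle
  by_contra hcon
  push Not at hcon
  have hz : ∀ u v, G.Adj u v → x u = 0 → x v = 0 := by
    intro u v huv hu
    have h1 := hcon u
    rw [hu, mul_zero] at h1
    have h2 : adjMat G u v * x v ≤ (adjMat G).mulVec x u :=
      Finset.single_le_sum (f := fun j => adjMat G u j * x j)
        (fun j _ => mul_nonneg (adj_nonneg G u j) (h0 j)) (Finset.mem_univ v)
    rw [adj_apply, if_pos huv] at h2
    have := h0 v
    linarith
  obtain ⟨w⟩ := hG.preconnected a b
  have : ∀ (a b : V) (_ : G.Walk a b), x a = 0 → x b = 0 := by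
    intro a b w
    induction w with
    | nil => exact id
    | cons h p ih => exact fun h' => ih (hz _ _ h h')
  have := this a b w ha
  linarith

lemma mem_spec_iff (G : SimpleGraph V) (μ : ℝ) :
    μ ∈ spectrum ℝ (adjMat G) ↔ ∃ y : V → ℝ, y ≠ 0 ∧ (adjMat G).mulVec y = μ • y := by
  rw [← Matrix.spectrum_toLin', ← Module.End.hasEigenvalue_iff_mem_spectrum]
  constructor
  · intro h
    obtain ⟨y, hy⟩ := h.exists_hasEigenvector
    exact ⟨y, hy.2, by simpa using hy.apply_eq_smul⟩
  · rintro ⟨y, hy, h⟩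
    exact Module.End.hasEigenvalue_of_hasEigenvector
      ⟨Module.End.mem_eigenspace_iff.2 (by simpa using h), hy⟩

lemma spec_eq (G : SimpleGraph V) [Nonempty V] (t : ℝ) (x : V → ℝ) (h0 : ∀ v, 0 < x v)
    (he : ∀ v, (adjMat G).mulVec x v = t * x v) : specRad G = t := by
  have hmem : t ∈ spectrum ℝ (adjMat G) := by
    rw [mem_spec_iff]
    refine ⟨x, ?_, funext fun v => by simpa using he v⟩
    intro h
    have := h0 (Classical.arbitrary V)
    rw [h] at this
    simp at this
  apply le_antisymm
  · refine csSup_le ⟨t, hmem⟩ ?_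
    intro μ hμ
    obtain ⟨y, hy, hye⟩ := (mem_spec_iff G μ).1 hμ
    let z : V → ℝ := fun v => |y v|
    have hz : ∀ v, μ * z v ≤ (adjMat G).mulVec z v := by
      intro v
      have h1 := congrFun hye v
      simp only [Pi.smul_apply, smul_eq_mul] at h1
      calc μ * z v ≤ |μ * y v| := by
            rw [abs_mul]; exact mul_le_mul_of_nonneg_right (le_abs_self _) (abs_nonneg _)
        _ = |(adjMat G).mulVec y v| := by rw [h1]
        _ ≤ ∑ j, |adjMat G v j * y j| := Finset.abs_sum_le_sum_abs _ _
        _ = _ := by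
            refine Finset.sum_congr rfl fun j _ => ?_
            rw [abs_mul, abs_of_nonneg (adj_nonneg G v j)]
    have hpos : 0 < x ⬝ᵥ z := by
      obtain ⟨v, hv⟩ := Function.ne_iff.1 hy
      refine Finset.sum_pos' (fun i _ => mul_nonneg (h0 i).le (abs_nonneg _)) ⟨v, Finset.mem_univ _, ?_⟩
      exact mul_pos (h0 v) (abs_pos.2 hv)
    have h2 : μ * (x ⬝ᵥ z) ≤ t * (x ⬝ᵥ z) := by
      calc μ * (x ⬝ᵥ z) = ∑ v, x v * (μ * z v) := by
            simp only [dotProduct, Finset.mul_sum]; exact Finset.sum_congr rfl fun _ _ => by ring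
        _ ≤ ∑ v, x v * (adjMat G).mulVec z v :=
            Finset.sum_le_sum fun v _ => mul_le_mul_of_nonneg_left (hz v) (h0 v).le
        _ = ∑ v, (adjMat G).mulVec x v * z v := by
            simp only [Matrix.mulVec, dotProduct, Finset.mul_sum, Finset.sum_mul]
            rw [Finset.sum_comm]
            refine Finset.sum_congr rfl fun i _ => Finset.sum_congr rfl fun j _ => ?_
            rw [adj_symm G j i]; ring
        _ = t * (x ⬝ᵥ z) := by
            simp only [he, dotProduct, Finset.mul_sum]; exact Finset.sum_congr rfl fun _ _ => by ring
    exact le_of_mul_le_mul_right h2 hpos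
  · exact le_csSup (spec_fin G).bddAbove hmem

lemma spec_iso {W : Type*} [Fintype W] [DecidableEq W] (G : SimpleGraph V) (H : SimpleGraph W)
    (e : G ≃g H) : specRad G = specRad H := by
  classical
  have : adjMat H = Matrix.reindexAlgEquiv ℝ ℝ e.toEquiv (adjMat G) := by
    ext i j
    simp only [Matrix.coe_reindexAlgEquiv, Matrix.reindex_apply, Matrix.submatrix_apply]
    rw [adj_apply, adj_apply]
    have := e.map_adj_iff (v := e.symm i) (w := e.symm j)
    simp at this
    simp only [this]
    rfl
  unfold specRad
  rw [this, AlgEquiv.spectrum_eq]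

lemma mulVec_mono (G H : SimpleGraph V) (hGH : G ≤ H) (x : V → ℝ) (h0 : ∀ v, 0 ≤ x v) (v : V) :
    (adjMat G).mulVec x v ≤ (adjMat H).mulVec x v := by
  classical
  refine Finset.sum_le_sum fun j _ => mul_le_mul_of_nonneg_right ?_ (h0 j)
  beta_reduce
  rw [adj_apply, adj_apply]
  by_cases h : G.Adj v j
  · simp [h, hGH h]
  · simp only [h, if_false]; split_ifs <;> norm_num

lemma mulVec_lt (G H : SimpleGraph V) (hGH : G ≤ H) (hne : G ≠ H) (x : V → ℝ) (h0 : ∀ v, 0 < x v) :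
    ∃ v, (adjMat G).mulVec x v < (adjMat H).mulVec x v := by
  classical
  by_contra hcon
  push Not at hcon
  apply hne
  apply le_antisymm hGH
  intro u v huv
  by_contra hn
  have h1 := hcon u
  have : (adjMat G).mulVec x u < (adjMat H).mulVec x u := by
    refine Finset.sum_lt_sum (fun j _ => mul_le_mul_of_nonneg_right ?_ (h0 j).le)
      ⟨v, Finset.mem_univ _, ?_⟩
    · beta_reduce
      rw [adj_apply, adj_apply]
      by_cases h : G.Adj u j
      · simp [h, hGH h]
      · simp only [h, if_false]; split_ifs <;> norm_num
    · beta_reduce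
      rw [adj_apply, adj_apply]
      simp [hn, huv, h0 v]
  linarith

lemma mulVec_eq_sum (G : SimpleGraph V) [DecidableRel G.Adj] (x : V → ℝ) (v : V) :
    (adjMat G).mulVec x v = ∑ u ∈ G.neighborFinset v, x u := by
  simp only [Matrix.mulVec, dotProduct, adj_apply, ite_mul, one_mul, zero_mul]
  rw [← Finset.sum_filter]
  refine Finset.sum_congr ?_ fun _ _ => rfl
  ext u; simp

end

/-- The variant of `G2graph` in which the two cross edges share their endpoint. -/
def G2s (a b c : ℕ) : SimpleGraph (Fin 7 ⊕ (Fin a ⊕ Fin b ⊕ Fin c)) :=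
  SimpleGraph.fromRel (fun x y =>
    (x = Sum.inl 0 ∧ y = Sum.inl 1) ∨
    (x = Sum.inl 1 ∧ y = Sum.inl 2) ∨
    (x = Sum.inl 2 ∧ y = Sum.inl 3) ∨
    (x = Sum.inl 3 ∧ y = Sum.inl 4) ∨
    (x = Sum.inl 2 ∧ y = Sum.inl 5) ∨
    (x = Sum.inl 5 ∧ y = Sum.inl 6) ∨
    (∃ j : Fin a, x = Sum.inl 0 ∧ y = Sum.inr (Sum.inl j)) ∨
    (∃ j : Fin b, x = Sum.inl 3 ∧ y = Sum.inr (Sum.inr (Sum.inl j))) ∨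
    (∃ j : Fin c, x = Sum.inl 6 ∧ y = Sum.inr (Sum.inr (Sum.inr j))))

/-- Vector on the model vertex set, constant on each leaf class. -/
def vec {p q r : ℕ} (f : Fin 7 → ℝ) (a b c : ℝ) : Fin 7 ⊕ (Fin p ⊕ Fin q ⊕ Fin r) → ℝ
  | Sum.inl i => f i
  | Sum.inr (Sum.inl _) => a
  | Sum.inr (Sum.inr (Sum.inl _)) => b
  | Sum.inr (Sum.inr (Sum.inr _)) => c

lemma mv_G2 (p q r : ℕ) (f : Fin 7 → ℝ) (a b c : ℝ) :
    (adjMat (G2graph p q r)).mulVec (vec f a b c) =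
      vec ![p * a + f 1, f 0 + f 2, f 1 + f 3, f 2 + f 4 + q * b, f 3 + f 5, f 4 + f 6,
        f 5 + r * c] (f 0) (f 3) (f 6) := by
  classical
  funext v
  simp only [Matrix.mulVec, dotProduct, adj_apply, Fintype.sum_sum_type, Fin.sum_univ_seven, vec]
  rcases v with v | v | v | v
  · fin_cases v <;> simp [G2graph, vec] <;> ring
  · simp [G2graph, vec]
  · simp [G2graph, vec]
  · simp [G2graph, vec]

lemma mv_G2s (p q r : ℕ) (f : Fin 7 → ℝ) (a b c : ℝ) :
    (adjMat (G2s p q r)).mulVec (vec f a b c) =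
      vec ![p * a + f 1, f 0 + f 2, f 1 + f 3 + f 5, f 2 + f 4 + q * b, f 3, f 2 + f 6,
        f 5 + r * c] (f 0) (f 3) (f 6) := by
  classical
  funext v
  simp only [Matrix.mulVec, dotProduct, adj_apply, Fintype.sum_sum_type, Fin.sum_univ_seven, vec]
  rcases v with v | v | v | v
  · fin_cases v <;> simp [G2s, vec] <;> ring
  · simp [G2s, vec]
  · simp [G2s, vec]
  · simp [G2s, vec]

lemma exists_root (m : ℝ) (hm : 3 ≤ m) : ∃ s : ℝ, m < s ∧ s ≤ m + 1 ∧
    ((s - m) * (s - 1) - 1) * ((s - m + 1) * (s - 1) - 2) = 2 * s := by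
  let g : ℝ → ℝ := fun s => ((s - m) * (s - 1) - 1) * ((s - m + 1) * (s - 1) - 2) - 2 * s
  have hg : ContinuousOn g (Set.Icc m (m + 1)) := by
    apply Continuous.continuousOn; unfold g; fun_prop
  have h := intermediate_value_Icc (by linarith : m ≤ m + 1) hg
  have h0 : (0 : ℝ) ∈ Set.Icc (g m) (g (m + 1)) := by
    constructor
    · simp only [g]; nlinarith
    · simp only [g]; nlinarith
  obtain ⟨s, hs, hgs⟩ := h h0
  have hgs' : ((s - m) * (s - 1) - 1) * ((s - m + 1) * (s - 1) - 2) - 2 * s = 0 := hgs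
  refine ⟨s, lt_of_le_of_ne hs.1 ?_, hs.2, by linarith⟩
  rintro rfl
  nlinarith

/-- The numerical facts about the extremal spectral radius `t`. -/
structure Good (m t : ℝ) : Prop where
  hm : 3 ≤ m
  tpos : 0 < t
  lo : m < t ^ 2
  hi : t ^ 2 ≤ m + 1
  eq : ((t ^ 2 - m) * (t ^ 2 - 1) - 1) * ((t ^ 2 - m + 1) * (t ^ 2 - 1) - 2) = 2 * t ^ 2

lemma exists_good (m : ℝ) (hm : 3 ≤ m) : ∃ t, Good m t := by
  obtain ⟨s, h1, h2, h3⟩ := exists_root m hm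
  have hs : Real.sqrt s ^ 2 = s := Real.sq_sqrt (by linarith)
  refine ⟨Real.sqrt s, hm, Real.sqrt_pos.2 (by linarith), ?_, ?_, ?_⟩ <;> rw [hs] <;> assumption

lemma Good.first {m t : ℝ} (h : Good m t) : 0 < (t ^ 2 - m) * (t ^ 2 - 1) - 1 := by
  have h1 := h.eq
  have h2 := h.lo
  have h3 := h.hm
  have hd : 0 < (t ^ 2 - m) * (t ^ 2 - 1) := mul_pos (by linarith) (by linarith)
  by_contra hc
  push Not at hc
  have : 0 ≤ (t ^ 2 - m + 1) * (t ^ 2 - 1) - 2 := by nlinarith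
  nlinarith [mul_nonneg (sub_nonneg.2 hc) this]

/-- Vector for the model with distinct cross endpoints. -/
noncomputable def vd {p q r : ℕ} (t R a c b : ℝ) : Fin 7 ⊕ (Fin p ⊕ Fin q ⊕ Fin r) → ℝ :=
  vec ![a, (t * a + c) * R, (t * c + a) * R, c, (t * c + b) * R, (t * b + c) * R, b]
    (a / t) (c / t) (b / t)

lemma vd_pos {p q r : ℕ} (t R a c b : ℝ) (ht : 0 < t) (hR : 0 < R) (ha : 0 < a) (hc : 0 < c)
    (hb : 0 < b) (v : Fin 7 ⊕ (Fin p ⊕ Fin q ⊕ Fin r)) : 0 < vd t R a c b v := by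
  rcases v with v | v | v | v
  · fin_cases v <;> simp [vd, vec] <;> positivity
  all_goals simp only [vd, vec]; positivity

lemma vd_sub {p q r : ℕ} (t R a c b : ℝ) (ht : 0 < t) (hR : R * (t ^ 2 - 1) = 1)
    (h0 : (t ^ 2 - p - t ^ 2 * R) * a = t * R * c) (h6 : (t ^ 2 - r - t ^ 2 * R) * b = t * R * c)
    (v : Fin 7 ⊕ (Fin p ⊕ Fin q ⊕ Fin r)) (hv : v ≠ Sum.inl 3) :
    (adjMat (G2graph p q r)).mulVec (vd t R a c b) v = t * vd t R a c b v := by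
  unfold vd
  rw [mv_G2]
  rcases v with v | v | v | v
  · fin_cases v
    · simp [vec]; field_simp; linarith
    · simp [vec]; linear_combination (-a) * hR
    · simp [vec]; linear_combination (-c) * hR
    · exact absurd rfl hv
    · simp [vec]; linear_combination (-c) * hR
    · simp [vec]; linear_combination (-b) * hR
    · simp [vec]; field_simp; linarith
  all_goals simp [vec]; field_simp

lemma vd_mid {p q r : ℕ} (t R a c b : ℝ) (ht : 0 < t) :
    (adjMat (G2graph p q r)).mulVec (vd t R a c b) (Sum.inl 3)
      - t * vd (p := p) (q := q) (r := r) t R a c b (Sum.inl 3)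
     = ((a + b) * t * R - (t ^ 2 - q - 2 * t ^ 2 * R) * c) / t := by
  unfold vd
  rw [mv_G2]
  simp [vec]; field_simp; ring

lemma T1_spec (m : ℕ) (t : ℝ) (h : Good m t) (hm : 3 ≤ m) :
    ∃ x : Fin 7 ⊕ (Fin (m-1) ⊕ Fin (m-3) ⊕ Fin (m-1)) → ℝ, (∀ v, 0 < x v) ∧
      ∀ v, (adjMat (G2graph (m-1) (m-3) (m-1))).mulVec x v = t * x v := by
  obtain ⟨n, rfl⟩ := Nat.exists_eq_add_of_le hm
  have h1 := h.eq
  have h2 := h.lo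
  have h3 := h.hm
  have h4 := h.first
  have ht := h.tpos
  have hs : 0 < t ^ 2 - 1 := by linarith
  set R := (t ^ 2 - 1)⁻¹ with hRdef
  have hR : R * (t ^ 2 - 1) = 1 := inv_mul_cancel₀ hs.ne'
  have hRp : 0 < R := inv_pos.2 hs
  set m : ℝ := ((3 + n : ℕ) : ℝ) with hmdef
  have hA : 0 < t ^ 2 - m - R := by
    have : t ^ 2 - m - R = ((t ^ 2 - m) * (t ^ 2 - 1) - 1) * R := by
      linear_combination (-(t^2 - m)) * hR
    rw [this]; positivity
  have e1 : ((3 + n - 1 : ℕ) : ℝ) = m - 1 := by rw [hmdef, Nat.cast_sub (by omega)]; simp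
  have e3 : ((3 + n - 3 : ℕ) : ℝ) = m - 3 := by rw [hmdef, Nat.cast_sub (by omega)]; simp
  have hend : (t ^ 2 - ((3 + n - 1 : ℕ) : ℝ) - t ^ 2 * R) * (t * R) = t * R * (t ^ 2 - m - R) := by
    rw [e1]; linear_combination (-t * R) * hR
  refine ⟨vd t R (t * R) (t ^ 2 - m - R) (t * R), fun v => vd_pos _ _ _ _ _ ht hRp
    (by positivity) hA (by positivity) v, fun v => ?_⟩
  by_cases hv : v = Sum.inl 3
  · subst hv
    rw [← sub_eq_zero, vd_mid _ _ _ _ _ ht, e3]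
    have hE : (t ^ 2 - m - R) * (t ^ 2 - m + 1 - 2 * R) = 2 * t ^ 2 * R ^ 2 := by
      have k1 : t ^ 2 - m - R = ((t ^ 2 - m) * (t ^ 2 - 1) - 1) * R := by
        linear_combination (-(t^2 - m)) * hR
      have k2 : t ^ 2 - m + 1 - 2 * R = ((t ^ 2 - m + 1) * (t ^ 2 - 1) - 2) * R := by
        linear_combination (-(t^2 - m + 1)) * hR
      rw [k1, k2]; linear_combination R ^ 2 * h1
    have : (t * R + t * R) * t * R - (t ^ 2 - (m - 3) - 2 * t ^ 2 * R) * (t ^ 2 - m - R) = 0 := by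
      linear_combination -hE + 2 * (t ^ 2 - m - R) * hR
    rw [this]; simp
  · exact vd_sub t R _ _ _ ht hR hend hend v hv

lemma T3_strict (m : ℕ) (t : ℝ) (h : Good m t) (hm : 3 ≤ m)
    (H : SimpleGraph (Fin 7 ⊕ (Fin (m-1) ⊕ Fin (m-2) ⊕ Fin (m-2))))
    (hH : G2graph (m-1) (m-2) (m-2) ≤ H) : t < specRad H := by
  obtain ⟨n, rfl⟩ := Nat.exists_eq_add_of_le hm
  have h1 := h.eq
  have h2 := h.lo
  have h3 := h.hm
  have h4 := h.first
  have ht := h.tpos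
  have hs : 0 < t ^ 2 - 1 := by linarith
  set R := (t ^ 2 - 1)⁻¹ with hRdef
  have hR : R * (t ^ 2 - 1) = 1 := inv_mul_cancel₀ hs.ne'
  have hRp : 0 < R := inv_pos.2 hs
  set m : ℝ := ((3 + n : ℕ) : ℝ) with hmdef
  have k1 : t ^ 2 - m - R = ((t ^ 2 - m) * (t ^ 2 - 1) - 1) * R := by
    linear_combination (-(t^2 - m)) * hR
  have hA : 0 < t ^ 2 - m - R := by
    rw [k1]; positivity
  have e1 : ((3 + n - 1 : ℕ) : ℝ) = m - 1 := by rw [hmdef, Nat.cast_sub (by omega)]; simp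
  have e2 : ((3 + n - 2 : ℕ) : ℝ) = m - 2 := by rw [hmdef, Nat.cast_sub (by omega)]; simp
  have hE : (t ^ 2 - m - R) * (t ^ 2 - m + 1 - 2 * R) = 2 * t ^ 2 * R ^ 2 := by
    have k2 : t ^ 2 - m + 1 - 2 * R = ((t ^ 2 - m + 1) * (t ^ 2 - 1) - 2) * R := by
      linear_combination (-(t^2 - m + 1)) * hR
    rw [k1, k2]; linear_combination R ^ 2 * h1
  set A := t ^ 2 - m - R with hAdef
  have hend : (t ^ 2 - ((3 + n - 1 : ℕ) : ℝ) - t ^ 2 * R) * (t * R * (A + 1))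
      = t * R * (A * (A + 1)) := by
    rw [e1, hAdef]; linear_combination (-t * R * (t ^ 2 - m - R + 1)) * hR
  have hend' : (t ^ 2 - ((3 + n - 2 : ℕ) : ℝ) - t ^ 2 * R) * (t * R * A)
      = t * R * (A * (A + 1)) := by
    rw [e2, hAdef]; linear_combination (-t * R * (t ^ 2 - m - R)) * hR
  have hpos : ∀ v, 0 < vd (p := 3 + n - 1) (q := 3 + n - 2) (r := 3 + n - 2) t R
      (t * R * (A + 1)) (A * (A + 1)) (t * R * A) v :=
    fun v => vd_pos _ _ _ _ _ ht hRp (by positivity) (by positivity) (by positivity) v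
  have hmid : t * vd (p := 3 + n - 1) (q := 3 + n - 2) (r := 3 + n - 2) t R
      (t * R * (A + 1)) (A * (A + 1)) (t * R * A) (Sum.inl 3) <
      (adjMat (G2graph (3 + n - 1) (3 + n - 2) (3 + n - 2))).mulVec (vd t R
      (t * R * (A + 1)) (A * (A + 1)) (t * R * A)) (Sum.inl 3) := by
    rw [← sub_pos, vd_mid _ _ _ _ _ ht, e2]
    apply div_pos _ ht
    have hE' : 2 * t ^ 2 * R ^ 2 = A * (A + 1 - R) := by rw [← hE, hAdef]; ring
    have hc : t ^ 2 - (m - 2) - 2 * t ^ 2 * R = A - R := by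
      rw [hAdef]; linear_combination (-2) * hR
    rw [hc]
    have : (t * R * (A + 1) + t * R * A) * t * R - (A - R) * (A * (A + 1))
       = (A * (A + 1 + R)) / 2 := by
      linear_combination ((2 * A + 1) / 2) * hE'
    rw [this]; positivity
  apply key_strict H t _ (fun v => (hpos v).le)
  · intro v
    refine le_trans ?_ (mulVec_mono _ _ hH _ (fun v => (hpos v).le) v)
    by_cases hv : v = Sum.inl 3
    · subst hv; exact hmid.le
    · exact (vd_sub t R _ _ _ ht hR hend hend' v hv).ge
  · exact ⟨Sum.inl 3, lt_of_lt_of_le hmid (mulVec_mono _ _ hH _ (fun v => (hpos v).le) _)⟩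

lemma shared_strict (p q r : ℕ) (t : ℝ) (ht : 0 < t)
    (hp : 0 < t ^ 2 - p - 1) (hq : 0 < t ^ 2 - q - 1) (hr : 0 < t ^ 2 - r - 1)
    (hineq : t ^ 2 - 2 < t ^ 2 / (t ^ 2 - q - 1) + 1 / (t ^ 2 - p - 1) + 1 / (t ^ 2 - r - 1))
    (H : SimpleGraph (Fin 7 ⊕ (Fin p ⊕ Fin q ⊕ Fin r))) (hH : G2s p q r ≤ H) :
    t < specRad H := by
  set P := t ^ 2 - p - 1 with hP
  set Q := t ^ 2 - q - 1 with hQ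
  set S := t ^ 2 - r - 1 with hS
  let x : Fin 7 ⊕ (Fin p ⊕ Fin q ⊕ Fin r) → ℝ :=
    vec ![1 / P, (1 + 1 / P) / t, 1, t / Q, 1 / Q, (1 + 1 / S) / t, 1 / S]
      (1 / P / t) (1 / Q) (1 / S / t)
  have hx : ∀ v, 0 < x v := by
    rintro (v | v | v | v)
    · fin_cases v <;> simp [x, vec] <;> positivity
    all_goals simp only [x, vec]; positivity
  have hmid : t * x (Sum.inl 2) < (adjMat (G2s p q r)).mulVec x (Sum.inl 2) := by
    simp only [x]; rw [mv_G2s]; simp [vec]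
    rw [← sub_pos]
    have : (1 + P⁻¹) / t + t / Q + (1 + S⁻¹) / t - t
       = (t ^ 2 / Q + 1 / P + 1 / S - (t ^ 2 - 2)) / t := by field_simp; ring
    rw [this]
    exact div_pos (by linarith) ht
  have hle : ∀ v, t * x v ≤ (adjMat (G2s p q r)).mulVec x v := by
    intro v
    by_cases hv : v = Sum.inl 2
    · subst hv; exact hmid.le
    apply le_of_eq
    simp only [x]; rw [mv_G2s]
    have hP' : (p : ℝ) = t ^ 2 - P - 1 := by rw [hP]; ring
    have hQ' : (q : ℝ) = t ^ 2 - Q - 1 := by rw [hQ]; ring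
    have hS' : (r : ℝ) = t ^ 2 - S - 1 := by rw [hS]; ring
    clear_value P Q S
    rcases v with v | v | v | v
    · fin_cases v
      · simp [vec]; rw [hP']; field_simp; ring
      · simp [vec]; field_simp; ring
      · exact absurd rfl hv
      · simp [vec]; rw [hQ']; field_simp; ring
      · simp [vec]; field_simp
      · simp [vec]; field_simp
      · simp [vec]; rw [hS']; field_simp; ring
    all_goals simp [vec]; field_simp
  apply key_strict H t x (fun v => (hx v).le)
  · intro v
    exact (hle v).trans (mulVec_mono _ _ hH _ (fun v => (hx v).le) v)
  · exact ⟨_, lt_of_lt_of_le hmid (mulVec_mono _ _ hH _ (fun v => (hx v).le) _)⟩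

lemma Good.small {m t : ℝ} (h : Good m t) : (t ^ 2 - m) * t ^ 2 < 2 * (t ^ 2 - m) + 4 := by
  by_contra hc
  push Not at hc
  have h1 := h.eq
  have h2 := h.lo
  have h3 := h.hm
  generalize t ^ 2 = s at *
  have a1 : 3 ≤ (s - m) * (s - 1) - 1 := by nlinarith
  have a2 : s + 1 ≤ (s - m + 1) * (s - 1) - 2 := by nlinarith
  nlinarith [mul_le_mul a1 a2 (by linarith) (by linarith)]

lemma T2_strict (m : ℕ) (t : ℝ) (h : Good m t) (hm : 3 ≤ m)
    (H : SimpleGraph (Fin 7 ⊕ (Fin (m-1) ⊕ Fin (m-3) ⊕ Fin (m-1))))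
    (hH : G2s (m-1) (m-3) (m-1) ≤ H) : t < specRad H := by
  have e1 : ((m - 1 : ℕ) : ℝ) = m - 1 := by rw [Nat.cast_sub (by omega)]; simp
  have e3 : ((m - 3 : ℕ) : ℝ) = m - 3 := by rw [Nat.cast_sub (by omega)]; simp
  have h2 := h.lo
  have h5 := h.small
  have h3 := h.hm
  apply shared_strict _ _ _ t h.tpos _ _ _ _ H hH <;> simp only [e1, e3]
  · linarith
  · linarith
  · linarith
  · have f1 : t ^ 2 - ((m:ℝ) - 1) - 1 = t ^ 2 - m := by ring
    have f2 : t ^ 2 - ((m:ℝ) - 3) - 1 = t ^ 2 - m + 2 := by ring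
    rw [f1, f2]
    generalize t ^ 2 = s at *
    obtain ⟨d, hd⟩ : ∃ d, d = s - m := ⟨_, rfl⟩
    have hd0 : 0 < d := by linarith
    rw [← hd] at h5 ⊢
    rw [← sub_pos]
    have : s / (d + 2) + 1 / d + 1 / d - (s - 2)
      = ((d + 1) * (2 * d + 4 - d * s)) / (d * (d + 2)) := by field_simp; ring
    rw [this]
    exact div_pos (mul_pos (by linarith) (by linarith)) (by positivity)

lemma T4_strict (m : ℕ) (t : ℝ) (h : Good m t) (hm : 3 ≤ m)
    (H : SimpleGraph (Fin 7 ⊕ (Fin (m-1) ⊕ Fin (m-2) ⊕ Fin (m-2))))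
    (hH : G2s (m-1) (m-2) (m-2) ≤ H) : t < specRad H := by
  have e1 : ((m - 1 : ℕ) : ℝ) = m - 1 := by rw [Nat.cast_sub (by omega)]; simp
  have e2 : ((m - 2 : ℕ) : ℝ) = m - 2 := by rw [Nat.cast_sub (by omega)]; simp
  have h2 := h.lo
  have h5 := h.small
  have h3 := h.hm
  apply shared_strict _ _ _ t h.tpos _ _ _ _ H hH <;> simp only [e1, e2]
  · linarith
  · linarith
  · linarith
  · have f1 : t ^ 2 - ((m:ℝ) - 1) - 1 = t ^ 2 - m := by ring
    have f2 : t ^ 2 - ((m:ℝ) - 2) - 1 = t ^ 2 - m + 1 := by ring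
    rw [f1, f2]
    generalize t ^ 2 = s at *
    obtain ⟨d, hd⟩ : ∃ d, d = s - m := ⟨_, rfl⟩
    have hd0 : 0 < d := by linarith
    rw [← hd] at h5 ⊢
    rw [← sub_pos]
    have : s / (d + 1) + 1 / d + 1 / (d + 1) - (s - 2)
      = (d * (2 * d + 4 - d * s) + 1) / (d * (d + 1)) := by field_simp; ring
    rw [this]
    have := mul_pos hd0 (by linarith : 0 < 2 * d + 4 - d * s)
    exact div_pos (by linarith) (by positivity)

section
variable {V : Type*} [Fintype V] [DecidableEq V]

lemma sum_nb_ge (G : SimpleGraph V) [DecidableRel G.Adj] (x : V → ℝ) (h0 : ∀ v, 0 ≤ x v) (u v : V)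
    (h : G.Adj v u) : x u ≤ (adjMat G).mulVec x v := by
  rw [mulVec_eq_sum]
  exact Finset.single_le_sum (fun i _ => h0 i) (by simpa using h)

lemma star_strict (G : SimpleGraph V) [DecidableRel G.Adj] (hG : G.Connected) (t : ℝ) (ht : 0 < t)
    (v w : V) (hw : w ≠ v) (hvw : ¬ G.Adj v w) (hd : t ^ 2 ≤ G.degree v) : t < specRad G := by
  let x : V → ℝ := fun u => if u = v then t else if G.Adj v u then 1 else 0
  have hx : ∀ u, 0 ≤ x u := by
    intro u; simp only [x]; split_ifs <;> linarith
  refine key_conn G hG t x hx ?_ w v (by simp [x, hw, hvw]) (by simp [x, ht])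
  intro u
  by_cases hu : u = v
  · subst hu
    rw [mulVec_eq_sum]
    have : ∑ j ∈ G.neighborFinset u, x j = G.degree u := by
      rw [Finset.sum_congr rfl (g := fun _ => (1:ℝ))]
      · simp
      · intro j hj
        simp at hj
        simp [x, hj, hj.ne']
    rw [this]; simp [x]; nlinarith
  · by_cases hv : G.Adj v u
    · refine le_trans ?_ (sum_nb_ge G x hx v u hv.symm)
      simp [x, hu, hv]
    · have : x u = 0 := by simp [x, hu, hv]
      rw [this, mul_zero, mulVec_eq_sum]
      exact Finset.sum_nonneg fun i _ => hx i

lemma twin_strict (G : SimpleGraph V) [DecidableRel G.Adj] (hG : G.Connected) (t : ℝ) (ht : 0 < t)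
    (u v y w : V) (huv : u ≠ v) (hn : ¬ G.Adj u v) (huy : G.Adj u y) (hvy : G.Adj v y)
    (hwu : w ≠ u) (hwv : w ≠ v) (hw1 : ¬ G.Adj u w) (hw2 : ¬ G.Adj v w)
    (hdu : t ^ 2 ≤ G.degree u + 1) (hdv : t ^ 2 ≤ G.degree v + 1) : t < specRad G := by
  let x : V → ℝ := fun z => if z = u ∨ z = v then t else if z = y then 2 else
    if G.Adj u z ∨ G.Adj v z then 1 else 0
  have hx : ∀ u, 0 ≤ x u := by
    intro u; simp only [x]; split_ifs <;> linarith
  have hwy : w ≠ y := by rintro rfl; exact hw1 huy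
  have xu : x u = t := by simp [x]
  have xv : x v = t := by simp [x]
  have xy : x y = 2 := by simp [x, huy.ne', hvy.ne']
  have hsum : ∀ a, G.Adj a y → ¬ G.Adj a u → ¬ G.Adj a v → (∀ j, G.Adj a j → G.Adj u j ∨ G.Adj v j) →
      (G.degree a : ℝ) + 1 ≤ (adjMat G).mulVec x a := by
    intro a hay hau hav haj
    rw [mulVec_eq_sum]
    have hy : y ∈ G.neighborFinset a := by simpa using hay
    rw [← Finset.add_sum_erase _ _ hy, xy]
    have h1 : ∑ j ∈ (G.neighborFinset a).erase y, (1:ℝ) ≤ ∑ j ∈ (G.neighborFinset a).erase y, x j := by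
      apply Finset.sum_le_sum
      intro j hj
      simp at hj
      have k1 : j ≠ u := by rintro rfl; exact hau hj.2
      have k2 : j ≠ v := by rintro rfl; exact hav hj.2
      simp [x, k1, k2, hj.1, haj j hj.2]
    rw [Finset.sum_const, Finset.card_erase_of_mem hy, G.card_neighborFinset_eq_degree] at h1
    have h2 : 1 ≤ G.degree a := by
      rw [← G.card_neighborFinset_eq_degree]; exact Finset.card_pos.2 ⟨y, hy⟩
    rw [nsmul_eq_mul, Nat.cast_sub h2] at h1
    push_cast at h1
    linarith
  refine key_conn G hG t x hx ?_ w u (by simp [x, hwu, hwv, hw1, hw2, hwy]) (by rw [xu]; exact ht)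
  intro z
  by_cases hzu : z = u
  · subst hzu
    have := hsum z huy (by simp) hn (fun j h => Or.inl h)
    rw [xu]; nlinarith
  by_cases hzv : z = v
  · subst hzv
    have := hsum z hvy (fun h => hn h.symm) (by simp) (fun j h => Or.inr h)
    rw [xv]; nlinarith
  by_cases hzy : z = y
  · subst hzy
    rw [xy, mulVec_eq_sum]
    have hsub : ({u, v} : Finset V) ⊆ G.neighborFinset z := by
      intro j; simp; rintro (rfl | rfl)
      · exact huy.symm
      · exact hvy.symm
    have := Finset.sum_le_sum_of_subset_of_nonneg hsub (f := x) (fun i _ _ => hx i)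
    rw [Finset.sum_pair huv, xu, xv] at this
    linarith
  by_cases h1 : G.Adj u z
  · refine le_trans ?_ (sum_nb_ge G x hx u z h1.symm)
    rw [xu]; simp [x, hzu, hzv, hzy, h1]
  by_cases h2 : G.Adj v z
  · refine le_trans ?_ (sum_nb_ge G x hx v z h2.symm)
    rw [xv]; simp [x, hzu, hzv, hzy, h2]
  have : x z = 0 := by simp [x, hzu, hzv, hzy, h1, h2]
  rw [this, mul_zero, mulVec_eq_sum]
  exact Finset.sum_nonneg fun i _ => hx i

lemma build (G : SimpleGraph V) [DecidableRel G.Adj] (p q r : ℕ)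
    (a b c y1 y2 z1 z2 : V)
    (hD : ∀ v, v = a ∨ v = b ∨ v = c ∨ G.Adj a v ∨ G.Adj b v ∨ G.Adj c v)
    (hz : z1 ≠ z2) (hz1 : G.Adj c z1) (hz2 : G.Adj c z2) (hy1 : G.Adj a y1) (hy2 : G.Adj b y2)
    (ha : G.degree a = p + 1) (hb : G.degree b = r + 1) (hc : G.degree c = q + 2)
    (hcard : Fintype.card V = p + q + r + 7) :
    ∃ f : (Fin 7 ⊕ (Fin p ⊕ Fin q ⊕ Fin r)) ≃ V,
      f (Sum.inl 0) = a ∧ f (Sum.inl 1) = y1 ∧ f (Sum.inl 2) = z1 ∧ f (Sum.inl 3) = c ∧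
      f (Sum.inl 4) = z2 ∧ f (Sum.inl 5) = y2 ∧ f (Sum.inl 6) = b ∧
      (∀ j, G.Adj a (f (Sum.inr (Sum.inl j)))) ∧
      (∀ j, G.Adj c (f (Sum.inr (Sum.inr (Sum.inl j))))) ∧
      (∀ j, G.Adj b (f (Sum.inr (Sum.inr (Sum.inr j))))) := by
  have ca : ((G.neighborFinset a).erase y1).card = p := by
    rw [Finset.card_erase_of_mem (by simpa using hy1), G.card_neighborFinset_eq_degree, ha]; rfl
  have cb : ((G.neighborFinset b).erase y2).card = r := by
    rw [Finset.card_erase_of_mem (by simpa using hy2), G.card_neighborFinset_eq_degree, hb]; rfl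
  have cc : (((G.neighborFinset c).erase z1).erase z2).card = q := by
    rw [Finset.card_erase_of_mem (by simp [hz2, hz.symm]),
      Finset.card_erase_of_mem (by simpa using hz1), G.card_neighborFinset_eq_degree, hc]; rfl
  let ea := Finset.equivFinOfCardEq ca
  let eb := Finset.equivFinOfCardEq cb
  let ec := Finset.equivFinOfCardEq cc
  let f : (Fin 7 ⊕ (Fin p ⊕ Fin q ⊕ Fin r)) → V :=
    Sum.elim ![a, y1, z1, c, z2, y2, b] (Sum.elim (fun j => (ea.symm j).1)
      (Sum.elim (fun j => (ec.symm j).1) (fun j => (eb.symm j).1)))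
  have hf : Function.Surjective f := by
    intro v
    rcases hD v with h | h | h | h | h | h
    · exact ⟨Sum.inl 0, by simp [f, h]⟩
    · exact ⟨Sum.inl 6, by simp [f, h]⟩
    · exact ⟨Sum.inl 3, by simp [f, h]⟩
    · by_cases hv : v = y1
      · exact ⟨Sum.inl 1, by simp [f, hv]⟩
      · exact ⟨Sum.inr (Sum.inl (ea ⟨v, by simp [h, hv]⟩)), by simp [f]⟩
    · by_cases hv : v = y2
      · exact ⟨Sum.inl 5, by simp [f, hv]⟩
      · exact ⟨Sum.inr (Sum.inr (Sum.inr (eb ⟨v, by simp [h, hv]⟩))), by simp [f]⟩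
    · by_cases hv : v = z1
      · exact ⟨Sum.inl 2, by simp [f, hv]⟩
      by_cases hv2 : v = z2
      · exact ⟨Sum.inl 4, by simp [f, hv2]⟩
      · exact ⟨Sum.inr (Sum.inr (Sum.inl (ec ⟨v, by simp [h, hv, hv2]⟩))), by simp [f]⟩
  have hbij : Function.Bijective f := by
    rw [Fintype.bijective_iff_surjective_and_card]
    refine ⟨hf, ?_⟩
    simp [hcard]; omega
  refine ⟨Equiv.ofBijective f hbij, rfl, rfl, rfl, rfl, rfl, rfl, rfl, ?_, ?_, ?_⟩
  · intro j
    have h := (ea.symm j).2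
    simp only [Finset.mem_erase, SimpleGraph.mem_neighborFinset] at h
    exact h.2
  · intro j
    have h := (ec.symm j).2
    simp only [Finset.mem_erase, SimpleGraph.mem_neighborFinset] at h
    exact h.2.2
  · intro j
    have h := (eb.symm j).2
    simp only [Finset.mem_erase, SimpleGraph.mem_neighborFinset] at h
    exact h.2

/-- Two neighbourhoods are joined by an edge. -/
def Link (G : SimpleGraph V) (u v : V) : Prop := ∃ y z, G.Adj u y ∧ G.Adj v z ∧ G.Adj y z

lemma Link.symm {G : SimpleGraph V} {u v : V} (h : Link G u v) : Link G v u := by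
  obtain ⟨y, z, h1, h2, h3⟩ := h
  exact ⟨z, y, h2, h1, h3.symm⟩

lemma caseB (G : SimpleGraph V) [DecidableRel G.Adj] (p q r : ℕ) (a b c : V)
    (hD : ∀ v, v = a ∨ v = b ∨ v = c ∨ G.Adj a v ∨ G.Adj b v ∨ G.Adj c v)
    (hca : Link G c a) (hcb : Link G c b)
    (ha : G.degree a = p + 1) (hb : G.degree b = r + 1) (hc : G.degree c = q + 2)
    (hcard : Fintype.card V = p + q + r + 7) :
    ∃ H : SimpleGraph (Fin 7 ⊕ (Fin p ⊕ Fin q ⊕ Fin r)), Nonempty (G ≃g H) ∧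
      (G2graph p q r ≤ H ∨ G2s p q r ≤ H) := by
  obtain ⟨z1, y1, hz1, hy1, h1⟩ := hca
  obtain ⟨z2, y2, hz2, hy2, h2⟩ := hcb
  by_cases hz : z1 = z2
  · subst hz
    obtain ⟨z3, hz3, hne⟩ : ∃ z3, G.Adj c z3 ∧ z3 ≠ z1 := by
      have : 1 < (G.neighborFinset c).card := by rw [G.card_neighborFinset_eq_degree]; omega
      obtain ⟨z3, h, hn⟩ := Finset.exists_mem_ne this z1
      exact ⟨z3, by simpa using h, hn⟩
    obtain ⟨f, f0, f1, f2, f3, f4, f5, f6, fa, fc, fb⟩ := build G p q r a b c y1 y2 z1 z3 hD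
      hne.symm hz1 hz3 hy1 hy2 ha hb hc hcard
    refine ⟨G.comap f, ⟨(SimpleGraph.Iso.comap f G).symm⟩, Or.inr ?_⟩
    intro x y hxy
    simp only [G2s, SimpleGraph.fromRel_adj] at hxy
    rw [SimpleGraph.comap_adj]
    have key : ∀ x y, _ → G.Adj (f x) (f y) := fun x y
        (h : (x = Sum.inl 0 ∧ y = Sum.inl 1) ∨ (x = Sum.inl 1 ∧ y = Sum.inl 2) ∨
          (x = Sum.inl 2 ∧ y = Sum.inl 3) ∨ (x = Sum.inl 3 ∧ y = Sum.inl 4) ∨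
          (x = Sum.inl 2 ∧ y = Sum.inl 5) ∨ (x = Sum.inl 5 ∧ y = Sum.inl 6) ∨
          (∃ j : Fin p, x = Sum.inl 0 ∧ y = Sum.inr (Sum.inl j)) ∨
          (∃ j : Fin q, x = Sum.inl 3 ∧ y = Sum.inr (Sum.inr (Sum.inl j))) ∨
          (∃ j : Fin r, x = Sum.inl 6 ∧ y = Sum.inr (Sum.inr (Sum.inr j)))) => by
      rcases h with ⟨rfl, rfl⟩ | ⟨rfl, rfl⟩ | ⟨rfl, rfl⟩ | ⟨rfl, rfl⟩ | ⟨rfl, rfl⟩ | ⟨rfl, rfl⟩ |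
        ⟨j, rfl, rfl⟩ | ⟨j, rfl, rfl⟩ | ⟨j, rfl, rfl⟩
      · rw [f0, f1]; exact hy1
      · rw [f1, f2]; exact h1.symm
      · rw [f2, f3]; exact hz1.symm
      · rw [f3, f4]; exact hz3
      · rw [f2, f5]; exact h2
      · rw [f5, f6]; exact hy2.symm
      · rw [f0]; exact fa j
      · rw [f3]; exact fc j
      · rw [f6]; exact fb j
    rcases hxy.2 with h | h
    · exact key x y h
    · exact (key y x h).symm
  · obtain ⟨f, f0, f1, f2, f3, f4, f5, f6, fa, fc, fb⟩ := build G p q r a b c y1 y2 z1 z2 hD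
      hz hz1 hz2 hy1 hy2 ha hb hc hcard
    refine ⟨G.comap f, ⟨(SimpleGraph.Iso.comap f G).symm⟩, Or.inl ?_⟩
    intro x y hxy
    simp only [G2graph, SimpleGraph.fromRel_adj] at hxy
    rw [SimpleGraph.comap_adj]
    have key : ∀ x y, _ → G.Adj (f x) (f y) := fun x y
        (h : (x = Sum.inl 0 ∧ y = Sum.inl 1) ∨ (x = Sum.inl 1 ∧ y = Sum.inl 2) ∨
          (x = Sum.inl 2 ∧ y = Sum.inl 3) ∨ (x = Sum.inl 3 ∧ y = Sum.inl 4) ∨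
          (x = Sum.inl 4 ∧ y = Sum.inl 5) ∨ (x = Sum.inl 5 ∧ y = Sum.inl 6) ∨
          (∃ j : Fin p, x = Sum.inl 0 ∧ y = Sum.inr (Sum.inl j)) ∨
          (∃ j : Fin q, x = Sum.inl 3 ∧ y = Sum.inr (Sum.inr (Sum.inl j))) ∨
          (∃ j : Fin r, x = Sum.inl 6 ∧ y = Sum.inr (Sum.inr (Sum.inr j)))) => by
      rcases h with ⟨rfl, rfl⟩ | ⟨rfl, rfl⟩ | ⟨rfl, rfl⟩ | ⟨rfl, rfl⟩ | ⟨rfl, rfl⟩ | ⟨rfl, rfl⟩ |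
        ⟨j, rfl, rfl⟩ | ⟨j, rfl, rfl⟩ | ⟨j, rfl, rfl⟩
      · rw [f0, f1]; exact hy1
      · rw [f1, f2]; exact h1.symm
      · rw [f2, f3]; exact hz1.symm
      · rw [f3, f4]; exact hz2
      · rw [f4, f5]; exact h2
      · rw [f5, f6]; exact hy2.symm
      · rw [f0]; exact fa j
      · rw [f3]; exact fc j
      · rw [f6]; exact fb j
    rcases hxy.2 with h | h
    · exact key x y h
    · exact (key y x h).symm

/-- Closed neighbourhood. -/
def cn (G : SimpleGraph V) [DecidableRel G.Adj] (v : V) : Finset V := insert v (G.neighborFinset v)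

lemma mem_cn (G : SimpleGraph V) [DecidableRel G.Adj] (v w : V) :
    w ∈ cn G v ↔ w = v ∨ G.Adj v w := by simp [cn]

lemma card_cn (G : SimpleGraph V) [DecidableRel G.Adj] (v : V) :
    (cn G v).card = G.degree v + 1 := by
  rw [cn, Finset.card_insert_of_notMem (by simp), G.card_neighborFinset_eq_degree]

lemma exit_link (G : SimpleGraph V) [DecidableRel G.Adj] (hG : G.Connected) (u v w : V)
    (hD : ∀ x, x ∈ cn G u ∨ x ∈ cn G v ∨ x ∈ cn G w)
    (huv : Disjoint (cn G u) (cn G v)) (huw : Disjoint (cn G u) (cn G w)) :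
    Link G u v ∨ Link G u w := by
  obtain ⟨W⟩ := hG.preconnected u v
  have hu : u ∈ cn G u := by simp [mem_cn]
  have hv : v ∈ cn G v := by simp [mem_cn]
  obtain ⟨d, -, h1, h2⟩ := W.exists_boundary_dart (cn G u : Set V) (by simpa using hu)
    (by simpa using fun h => Finset.disjoint_left.1 huv h hv)
  have hadj := d.adj
  generalize d.fst = y at *
  generalize d.snd = z at *
  simp only [Finset.mem_coe] at h1 h2
  have huy : G.Adj u y := by
    rcases (mem_cn G u y).1 h1 with h | h
    · subst h; exact absurd ((mem_cn G y z).2 (Or.inr hadj)) h2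
    · exact h
  rcases hD z with h | h | h
  · exact absurd h h2
  · left
    rcases (mem_cn G v z).1 h with h' | h'
    · subst h'
      exact absurd ((mem_cn G z y).2 (Or.inr hadj.symm)) (Finset.disjoint_left.1 huv h1)
    · exact ⟨y, z, huy, h', hadj⟩
  · right
    rcases (mem_cn G w z).1 h with h' | h'
    · subst h'
      exact absurd ((mem_cn G z y).2 (Or.inr hadj.symm)) (Finset.disjoint_left.1 huw h1)
    · exact ⟨y, z, huy, h', hadj⟩

/-- The case of a partition into closed neighbourhoods, sizes ordered. -/
lemma partition_case (m : ℕ) (hm : 3 ≤ m) (t : ℝ) (ht : Good m t)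
    (hcard : Fintype.card V = 3 * m + 2)
    (G : SimpleGraph V) [DecidableRel G.Adj] (hG : G.Connected) (u v w : V)
    (hD : ∀ x, x ∈ cn G u ∨ x ∈ cn G v ∨ x ∈ cn G w)
    (huv : Disjoint (cn G u) (cn G v)) (huw : Disjoint (cn G u) (cn G w))
    (hvw : Disjoint (cn G v) (cn G w))
    (du : G.degree u = m) (dv : G.degree v = m) (dw : G.degree w = m - 1) :
    t < specRad G ∨ Nonempty (G ≃g G2graph (m - 1) (m - 3) (m - 1)) := by
  have side : ∀ c a b : V, (∀ v, v = a ∨ v = b ∨ v = c ∨ G.Adj a v ∨ G.Adj b v ∨ G.Adj c v) →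
      Link G c a → Link G c b → G.degree c = m → G.degree a = m → G.degree b = m - 1 →
      t < specRad G := by
    intro c a b hd hca hcb dc da db
    obtain ⟨H, ⟨e⟩, h⟩ := caseB G (m - 1) (m - 2) (m - 2) a b c hd hca hcb (by omega) (by omega)
      (by omega) (by omega)
    rw [spec_iso G H e]
    rcases h with h | h
    · exact T3_strict m t ht hm H h
    · exact T4_strict m t ht hm H h
  have center : Link G w u → Link G w v →
      t < specRad G ∨ Nonempty (G ≃g G2graph (m - 1) (m - 3) (m - 1)) := by
    intro h1 h2
    obtain ⟨H, ⟨e⟩, h⟩ := caseB G (m - 1) (m - 3) (m - 1) u v w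
      (fun x => by
        rcases hD x with h | h | h <;> rcases (mem_cn G _ _).1 h with h | h <;> simp [h]) h1 h2 (by omega) (by omega)
      (by omega) (by omega)
    rcases h with h | h
    · by_cases hE : G2graph (m - 1) (m - 3) (m - 1) = H
      · right; rw [hE]; exact ⟨e⟩
      · left
        rw [spec_iso G H e]
        obtain ⟨x, hx, he⟩ := T1_spec m t ht hm
        apply key_strict H t x (fun v => (hx v).le)
        · intro v
          rw [← he v]
          exact mulVec_mono _ _ h x (fun v => (hx v).le) v
        · obtain ⟨v, hv⟩ := mulVec_lt _ _ h hE x hx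
          exact ⟨v, by rw [← he v]; exact hv⟩
    · left
      rw [spec_iso G H e]
      exact T2_strict m t ht hm H h
  have A := exit_link G hG u v w hD huv huw
  have B := exit_link G hG v u w (fun x => by have := hD x; tauto) huv.symm hvw
  have C := exit_link G hG w u v (fun x => by have := hD x; tauto) huw.symm hvw.symm
  have s1 : Link G u v → Link G u w → t < specRad G := fun h1 h2 =>
    side u v w (fun x => by
      rcases hD x with h | h | h <;> rcases (mem_cn G _ _).1 h with h | h <;> simp [h]) h1 h2 du dv dw
  have s2 : Link G v u → Link G v w → t < specRad G := fun h1 h2 =>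
    side v u w (fun x => by
      rcases hD x with h | h | h <;> rcases (mem_cn G _ _).1 h with h | h <;> simp [h]) h1 h2 dv du dw
  rcases A with A | A
  · rcases C with C | C
    · exact Or.inl (s1 A C.symm)
    · exact Or.inl (s2 A.symm C.symm)
  · rcases B with B | B
    · exact Or.inl (s1 B.symm A)
    · exact center A.symm B.symm

/-- Overlapping closed neighbourhoods. -/
lemma overlap_case (m : ℕ) (hm : 3 ≤ m) (t : ℝ) (ht : Good m t)
    (hcard : Fintype.card V = 3 * m + 2)
    (G : SimpleGraph V) [DecidableRel G.Adj] (hG : G.Connected)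
    (hΔ : ∀ v, G.degree v ≤ m) (u v w : V) (hne : u ≠ v)
    (hD : ∀ x, x ∈ cn G u ∨ x ∈ cn G v ∨ x ∈ cn G w)
    (huv : ¬ Disjoint (cn G u) (cn G v)) : t < specRad G := by
  have hU : (cn G u ∪ cn G v) ∪ cn G w = Finset.univ := by
    ext x; have := hD x; simp; tauto
  have c1 := Finset.card_union_add_card_inter (cn G u) (cn G v)
  have c2 := Finset.card_union_le (cn G u ∪ cn G v) (cn G w)
  rw [hU, Finset.card_univ, hcard] at c2
  rw [card_cn, card_cn] at c1
  rw [card_cn] at c2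
  have du := hΔ u
  have dv := hΔ v
  have dw := hΔ w
  have hpos : 0 < (cn G u ∩ cn G v).card := by
    rw [Finset.card_pos, ← Finset.not_disjoint_iff_nonempty_inter]; exact huv
  have hn : ¬ G.Adj u v := by
    intro h
    have : ({u, v} : Finset V) ⊆ cn G u ∩ cn G v := by
      intro x hx
      simp at hx
      rcases hx with rfl | rfl <;> simp [mem_cn, h, h.symm]
    have := Finset.card_le_card this
    rw [Finset.card_pair hne] at this
    omega
  obtain ⟨y, hy⟩ := Finset.card_pos.1 hpos
  simp only [Finset.mem_inter, mem_cn] at hy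
  have hy1 : G.Adj u y := by
    rcases hy.1 with h | h
    · subst h
      rcases hy.2 with h | h
      · exact absurd h hne
      · exact absurd h.symm hn
    · exact h
  have hy2 : G.Adj v y := by
    rcases hy.2 with h | h
    · subst h; exact absurd hy1 hn
    · exact h
  obtain ⟨z, hz⟩ : ∃ z, z ∉ cn G u ∪ cn G v := by
    by_contra hc
    push Not at hc
    have : cn G u ∪ cn G v = Finset.univ := by ext x; simp [-Finset.mem_union, hc x]
    rw [this, Finset.card_univ, hcard] at c1
    omega
  simp only [Finset.mem_union, mem_cn, not_or] at hz
  have eu : G.degree u = m := by omega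
  have ev : G.degree v = m := by omega
  exact twin_strict G hG t ht.tpos u v y z hne hn hy1 hy2 hz.1.1 hz.2.1 hz.1.2 hz.2.2
    (by rw [eu]; exact ht.hi) (by rw [ev]; exact ht.hi)

lemma main (m : ℕ) (hm : 3 ≤ m) (t : ℝ) (ht : Good m t)
    (hcard : Fintype.card V = 3 * m + 2)
    (G : SimpleGraph V) (hG : G.Connected) (hdom : domNum G = 3) :
    t < specRad G ∨ Nonempty (G ≃g G2graph (m - 1) (m - 3) (m - 1)) := by
  classical
  have hne : {k | ∃ D : Finset V, IsDomSet G D ∧ D.card = k}.Nonempty :=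
    ⟨_, Finset.univ, fun v hv => absurd (Finset.mem_univ v) hv, rfl⟩
  have hmem := Nat.sInf_mem hne
  change domNum G ∈ _ at hmem
  rw [hdom] at hmem
  obtain ⟨D, hDd, hD3⟩ := hmem
  obtain ⟨u, v, w, huv, huw, hvw, rfl⟩ := Finset.card_eq_three.1 hD3
  have hD : ∀ x, x ∈ cn G u ∨ x ∈ cn G v ∨ x ∈ cn G w := by
    intro x
    simp only [mem_cn]
    by_cases hx : x ∈ ({u, v, w} : Finset V)
    · simp at hx; tauto
    · obtain ⟨y, hy, hyx⟩ := hDd x hx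
      simp at hy
      rcases hy with rfl | rfl | rfl <;> tauto
  by_cases hΔ : ∃ v, m + 1 ≤ G.degree v
  · left
    obtain ⟨a, ha⟩ := hΔ
    have : ¬ IsDomSet G {a} := by
      intro h
      have : domNum G ≤ 1 := Nat.sInf_le ⟨{a}, h, by simp⟩
      omega
    unfold IsDomSet at this
    push Not at this
    obtain ⟨b, hb, hab⟩ := this
    refine star_strict G hG t ht.tpos a b (by simpa using hb) (hab a (by simp)) ?_
    refine ht.hi.trans ?_
    exact_mod_cast ha
  push Not at hΔ
  have hΔ' : ∀ v, G.degree v ≤ m := fun v => Nat.lt_succ_iff.1 (hΔ v)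
  by_cases d1 : Disjoint (cn G u) (cn G v)
  swap
  · exact Or.inl (overlap_case m hm t ht hcard G hG hΔ' u v w huv hD d1)
  by_cases d2 : Disjoint (cn G u) (cn G w)
  swap
  · exact Or.inl (overlap_case m hm t ht hcard G hG hΔ' u w v huw
      (fun x => by have := hD x; tauto) d2)
  by_cases d3 : Disjoint (cn G v) (cn G w)
  swap
  · exact Or.inl (overlap_case m hm t ht hcard G hG hΔ' v w u hvw
      (fun x => by have := hD x; tauto) d3)
  have hU : (cn G u ∪ cn G v) ∪ cn G w = Finset.univ := by
    ext x; have := hD x; simp; tauto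
  have hc := congrArg Finset.card hU
  rw [Finset.card_union_of_disjoint (Finset.disjoint_union_left.2 ⟨d2, d3⟩),
    Finset.card_union_of_disjoint d1, card_cn, card_cn, card_cn, Finset.card_univ, hcard] at hc
  have du := hΔ' u
  have dv := hΔ' v
  have dw := hΔ' w
  by_cases hw : G.degree w = m - 1
  · exact partition_case m hm t ht hcard G hG u v w hD d1 d2 d3 (by omega) (by omega) hw
  by_cases hv : G.degree v = m - 1
  · exact partition_case m hm t ht hcard G hG u w v (fun x => by have := hD x; tauto)
      d2 d1 d3.symm (by omega) (by omega) hv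
  · exact partition_case m hm t ht hcard G hG v w u (fun x => by have := hD x; tauto)
      d3 d1.symm d2.symm (by omega) (by omega) (by omega)

end

end SRProof

theorem domNum_three_min_specRad_n_eq_3m_add_two (m : ℕ) (hm : 3 ≤ m)
    (G : SimpleGraph (Fin (3 * m + 2))) (hconn : G.Connected) (hdom : domNum G = 3) :
    specRad (G2graph (m - 1) (m - 3) (m - 1)) ≤ specRad G ∧
    (specRad G = specRad (G2graph (m - 1) (m - 3) (m - 1)) ↔
      Nonempty (G ≃g G2graph (m - 1) (m - 3) (m - 1))) := by
  obtain ⟨t, ht⟩ := SRProof.exists_good (m : ℝ) (by exact_mod_cast hm)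
  have hs : specRad (G2graph (m - 1) (m - 3) (m - 1)) = t := by
    obtain ⟨x, hx, he⟩ := SRProof.T1_spec m t ht hm
    exact SRProof.spec_eq _ t x hx he
  have h := SRProof.main m hm t ht (by simp) G hconn hdom
  rw [hs]
  refine ⟨?_, ?_, ?_⟩
  · rcases h with h | ⟨⟨e⟩⟩
    · exact h.le
    · rw [SRProof.spec_iso _ _ e, hs]
  · intro heq
    rcases h with h | h
    · exact absurd heq h.ne'
    · exact h
  · rintro ⟨e⟩
    rw [SRProof.spec_iso _ _ e, hs]
end
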